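/- arXiv:1911.10731 — 2 statements merged into one kernel-verified Lean document; each statement's English description precedes it below -/
import Mathlib

section
/- For every cellular automaton f on A^ℤ, the language L(ω̃(f)) of its generic limit set is a Σ⁰₃ set of words. -/
open Filter Set Function

namespace Gls

variable {A : Type*}

/-- The left shift map on `A^ℤ`. -/
def shift (x : ℤ → A) : ℤ → A := fun i => x (i + 1)

/-- A cellular automaton: a continuous shift-commuting self-map of the full shift. -/
def IsCA [TopologicalSpace A] (f : (ℤ → A) → (ℤ → A)) : Prop :=
  Continuous f ∧ f ∘ shift = shift ∘ f

/-- The set of limit points of the forward orbit of `x` under `f`. -/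
def omegaSet [TopologicalSpace A] (f : (ℤ → A) → (ℤ → A)) (x : ℤ → A) : Set (ℤ → A) :=
  {y | MapClusterPt y atTop fun t => f^[t] x}

/-- The realm of attraction of `Y`. -/
def realm [TopologicalSpace A] (f : (ℤ → A) → (ℤ → A)) (Y : Set (ℤ → A)) : Set (ℤ → A) :=
  {x | omegaSet f x ⊆ Y}

/-- The generic limit set: the intersection of all closed sets whose realm is comeager. -/
def genLimitSet [TopologicalSpace A] (f : (ℤ → A) → (ℤ → A)) : Set (ℤ → A) :=
  ⋂₀ {C | IsClosed C ∧ realm f C ∈ residual (ℤ → A)}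

/-- The word `x_{[i, i+n)}` of length `n` read in the configuration `x` from position `i`. -/
def word (x : ℤ → A) (i : ℤ) (n : ℕ) : List A :=
  (List.range n).map fun k => x (i + k)

/-- The cylinder set `[w]_i`. -/
def cylinder (w : List A) (i : ℤ) : Set (ℤ → A) := {x | word x i w.length = w}

/-- The language of `X`: all finite words occurring in points of `X`. -/
def lang (X : Set (ℤ → A)) : Set (List A) :=
  {w | ∃ x ∈ X, ∃ i : ℤ, word x i w.length = w}


/-- The arithmetical hierarchy over `ℕ`: `NatSigma 0` is the class of computable
predicates, and a predicate is `NatSigma (n+1)` (i.e. `Σ⁰ₙ₊₁`) if it is of the form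
`{a | ∃ k, (a, k) ∈ R}` for a `Π⁰ₙ` relation `R` (i.e. a relation whose complement is `Σ⁰ₙ`). -/
def NatSigma : ℕ → (ℕ → Prop) → Prop
  | 0 => fun P => ComputablePred P
  | (n + 1) => fun P =>
      ∃ R : ℕ → Prop, NatSigma n (fun a => ¬ R a) ∧ ∀ a, P a ↔ ∃ k, R (Nat.pair a k)

/-- A set of words is `Σ⁰ₙ` if, identifying words with natural numbers via the canonical
computable encoding, it is a `Σ⁰ₙ` subset of `ℕ`. -/
def SigmaLang {A : Type*} [Primcodable A] (n : ℕ) (P : Set (List A)) : Prop :=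
  NatSigma n (fun m => ∃ w : List A, Encodable.encode w = m ∧ w ∈ P)

/-- A set of words is `Π⁰ₙ` if its complement is `Σ⁰ₙ`. -/
def PiLang {A : Type*} [Primcodable A] (n : ℕ) (P : Set (List A)) : Prop :=
  SigmaLang n {w | w ∉ P}

/-! Compactness reduces the question whether the generic limit set meets a clopen set `U` to whether
the realm of `Uᶜ` fails to be comeager. That realm is the `F_σ` set `⋃ T, {x | ∀ t ≥ T, fᵗ x ∉ U}`,
so by the Baire category theorem it is comeager iff the interiors of its pieces have dense union.
Hence the generic limit set meets `U` iff, for some nonempty open `V`, every nonempty open subset of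
`V` visits `U` at arbitrarily late times.

Restricting `V` and its subsets to cylinders, a word `w` occurs in the generic limit set iff there
are a word `u` and an offset such that for all extensions `a u b` and all `T` there is `t ≥ T` with
`fᵗ [a u b] ∩ [w] ≠ ∅`. By the local rule, the last condition is witnessed by a finite extension of
`a u b` that `t` steps of the block map send to `w`, so the quantifiers are `∃ ∀ ∃` over a decidable
condition. The position of `w` need not be quantified, because `f` commutes with the shift. -/

section Hierarchy

variable {α β γ δ : Type*} [Primcodable α] [Primcodable β] [Primcodable γ] [Primcodable δ] {n : ℕ}

theorem NatSigma.comp {P : ℕ → Prop} {g : ℕ → ℕ} (hP : NatSigma n P) (hg : Computable g) :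
    NatSigma n fun m => P (g m) := by
  induction n generalizing P g with
  | zero =>
    obtain ⟨b, hb, rfl⟩ := ComputablePred.computable_iff.1 hP
    exact ComputablePred.computable_iff.2 ⟨fun m => b (g m), hb.comp hg, rfl⟩
  | succ n ih =>
    obtain ⟨R, hR, hPR⟩ := hP
    have hpair : Computable fun m : ℕ => Nat.pair (g m.unpair.1) m.unpair.2 :=
      Primrec₂.natPair.to_comp.comp (hg.comp (Computable.fst.comp Computable.unpair))
        (Computable.snd.comp Computable.unpair)
    exact ⟨_, ih hR hpair, fun m => by simp only [hPR, Nat.unpair_pair]⟩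

theorem NatSigma.ite {P C : ℕ → Prop} [DecidablePred C] (hP : NatSigma n P)
    (hC : ComputablePred C) (q : Prop) : NatSigma n fun m => if C m then P m else q := by
  induction n generalizing P C q with
  | zero =>
    classical
    obtain ⟨b, hb, rfl⟩ := ComputablePred.computable_iff.1 hP
    refine ComputablePred.computable_iff.2
      ⟨fun m => bif decide (C m) then b m else decide q, hC.decide.cond hb (.const _), ?_⟩
    funext m
    by_cases h : C m <;> simp [h]
  | succ n ih =>
    obtain ⟨R, hR, hPR⟩ := hP
    have hC' : ComputablePred fun m : ℕ => C m.unpair.1 :=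
      Computable.computablePred (hC.decide.comp (Computable.fst.comp Computable.unpair))
    refine ⟨fun m => if C m.unpair.1 then R m else q, ?_, fun m => ?_⟩
    · simpa only [apply_ite Not] using ih hR hC' (¬q)
    · by_cases h : C m <;> simp [h, hPR]

/-- Level `n` of the arithmetical hierarchy for predicates on an arbitrary encoded type, so that
`SigmaLang n S` is `SigmaPred n (· ∈ S)`; natural numbers that encode nothing are excluded. -/
def SigmaPred (n : ℕ) (P : α → Prop) : Prop :=
  NatSigma n fun m => ∃ a, Encodable.encode a = m ∧ P a

theorem SigmaPred.of_natSigma {P : α → Prop} {Q : ℕ → Prop} (hQ : NatSigma n Q)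
    (h : ∀ a, Q (Encodable.encode a) ↔ P a) : SigmaPred n P := by
  classical
  have hcode := hQ.ite (Primcodable.mem_range_encode (α := α)).computablePred False
  have hiff (m : ℕ) : (if m ∈ range (Encodable.encode : α → ℕ) then Q m else False) ↔
      ∃ a, Encodable.encode a = m ∧ P a := by
    simp only [if_false_right, ← h]
    exact ⟨fun ⟨⟨a, ha⟩, hm⟩ => ⟨a, ha, ha ▸ hm⟩, fun ⟨a, ha, hm⟩ => ⟨⟨a, ha⟩, ha ▸ hm⟩⟩
  simpa only [SigmaPred, hiff] using hcode

theorem SigmaPred.of_computablePred {P : α → Prop} (hP : ComputablePred P) : SigmaPred 0 P := by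
  obtain ⟨b, hb, rfl⟩ := ComputablePred.computable_iff.1 hP
  have hdecode : Computable fun m => ((Encodable.decode (α := α) m).map b).getD false :=
    Computable.option_getD (Computable.option_map Computable.decode (hb.comp Computable.snd))
      (Computable.const false)
  exact .of_natSigma (ComputablePred.computable_iff.2 ⟨_, hdecode, rfl⟩) fun a => by
    simp only [Encodable.encodek, Option.map_some, Option.getD_some]

theorem SigmaPred.exists [Inhabited β] {R : α → β → Prop}
    (hR : SigmaPred n fun x : α × β => ¬R x.1 x.2) : SigmaPred (n + 1) fun a => ∃ b, R a b := by
  set N : ℕ → Prop := fun m => ∃ x : α × β, Encodable.encode x = m ∧ ¬R x.1 x.2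
  let e : ℕ → β := fun k => (Encodable.decode k).getD default
  have hN : ∀ a b, N (Nat.pair (Encodable.encode a) (Encodable.encode b)) ↔ ¬R a b := fun a b => by
    rw [← Encodable.encode_prod_val]
    simp only [N, Encodable.encode_inj, exists_eq_left]
  have hcode : Computable fun m : ℕ => Nat.pair m.unpair.1 (Encodable.encode (e m.unpair.2)) :=
    (Primrec₂.natPair.comp (Primrec.fst.comp Primrec.unpair) (Primrec.encode.comp
      (Primrec.option_getD.comp (Primrec.decode.comp (Primrec.snd.comp Primrec.unpair))
        (Primrec.const default)))).to_comp
  refine .of_natSigma (Q := fun m => ∃ k, ¬N (Nat.pair m (Encodable.encode (e k))))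
    ⟨fun m => ¬N (Nat.pair m.unpair.1 (Encodable.encode (e m.unpair.2))), ?_, fun m => ?_⟩
    fun a => ?_
  · simpa only [not_not] using NatSigma.comp hR hcode
  · simp only [Nat.unpair_pair]
  · have he : Surjective e := fun b => ⟨Encodable.encode b, by simp [e]⟩
    simp only [hN, not_not, he.exists]

theorem SigmaPred.exists_forall_exists [Inhabited β] [Inhabited γ] [Inhabited δ]
    {Q : α → β → γ → δ → Prop}
    (hQ : ComputablePred fun x : ((α × β) × γ) × δ => Q x.1.1.1 x.1.1.2 x.1.2 x.2) :
    SigmaPred 3 fun a => ∃ b, ∀ c, ∃ d, Q a b c d := by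
  have h₁ : SigmaPred 1 fun x : (α × β) × γ => ∃ d, Q x.1.1 x.1.2 x.2 d :=
    .exists (.of_computablePred hQ.not)
  have h₂ : SigmaPred 2 fun x : α × β => ∃ c, ¬∃ d, Q x.1 x.2 c d :=
    .exists (by simpa only [not_not] using h₁)
  exact .exists (by simpa only [not_forall] using h₂)

end Hierarchy

section Topology

variable {X : Type*} [TopologicalSpace X]

theorem iUnion_mem_residual_iff_dense_iUnion_interior [BaireSpace X] {ι : Type*} [Countable ι]
    {F : ι → Set X} (hF : ∀ i, IsClosed (F i)) :
    ⋃ i, F i ∈ residual X ↔ Dense (⋃ i, interior (F i)) := by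
  constructor
  · intro h
    obtain ⟨s, hsF, hs, hsd⟩ := mem_residual.1 h
    exact hs.dense_iUnion_interior_of_closed hsd hF hsF
  · intro h
    exact mem_of_superset (residual_of_dense_open (isOpen_iUnion fun _ => isOpen_interior) h)
      (iUnion_mono fun _ => interior_subset)

/-- `V` enables `U` under `f` if every nonempty open piece of `V` visits `U` at arbitrarily late
times. It is the local condition on `V` that makes the generic limit set meet `U`. -/
def Enables (f : X → X) (V U : Set X) : Prop :=
  ∀ W ⊆ V, IsOpen W → W.Nonempty → ∃ᶠ t in atTop, (W ∩ f^[t] ⁻¹' U).Nonempty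

theorem Enables.mono {f : X → X} {V V' U : Set X} (h : Enables f V U) (hV : V' ⊆ V) :
    Enables f V' U :=
  fun W hW => h W (hW.trans hV)

theorem enables_iff_disjoint_iUnion_interior {f : X → X} {V U : Set X} (hV : IsOpen V) :
    Enables f V U ↔ Disjoint V (⋃ T : ℕ, interior {x | ∀ t ≥ T, f^[t] x ∉ U}) := by
  simp only [Set.disjoint_iUnion_right]
  constructor
  · intro h T
    rw [Set.disjoint_iff_inter_eq_empty, ← Set.not_nonempty_iff_eq_empty]
    intro hne
    obtain ⟨t, htT, x, hx, hxU⟩ :=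
      frequently_atTop.1 (h _ inter_subset_left (hV.inter isOpen_interior) hne) T
    exact interior_subset hx.2 t htT hxU
  · intro h W hWV hW ⟨x, hx⟩
    rw [frequently_atTop]
    intro T
    by_contra! hT
    have hsub : W ⊆ {x | ∀ t ≥ T, f^[t] x ∉ U} := fun y hy t ht hyU =>
      (hT t ht).le ⟨hy, hyU⟩
    exact (h T).le_bot ⟨hWV hx, interior_maximal hsub hW hx⟩

theorem not_dense_iff_exists_disjoint {s : Set X} :
    ¬Dense s ↔ ∃ V, IsOpen V ∧ V.Nonempty ∧ Disjoint V s := by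
  simp only [dense_iff_inter_open, not_forall, Set.not_nonempty_iff_eq_empty,
    Set.disjoint_iff_inter_eq_empty, exists_prop]

theorem exists_finset_dependsOn {ι : Type*} {π : ι → Type*} [∀ i, TopologicalSpace (π i)]
    [∀ i, CompactSpace (π i)] {β : Type*} [TopologicalSpace β] [DiscreteTopology β]
    {g : (∀ i, π i) → β} (hg : Continuous g) : ∃ s : Finset ι, DependsOn g s := by
  classical
  suffices ∃ s : Finset ι, ∀ x ∈ univ, ∀ y, (∀ i ∈ s, x i = y i) → g x = g y by
    obtain ⟨s, hs⟩ := this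
    exact ⟨s, fun x y hxy => hs x (mem_univ x) y hxy⟩
  refine isCompact_univ.induction_on (p := fun K => ∃ s : Finset ι, ∀ x ∈ K, ∀ y,
    (∀ i ∈ s, x i = y i) → g x = g y) ⟨∅, by simp⟩ ?_ ?_ ?_
  · rintro K L hKL ⟨s, hs⟩
    exact ⟨s, fun x hx => hs x (hKL hx)⟩
  · rintro K L ⟨s, hs⟩ ⟨s', hs'⟩
    refine ⟨s ∪ s', ?_⟩
    rintro x (hx | hx) y hxy
    · exact hs x hx y fun i hi => hxy i (Finset.mem_union_left _ hi)
    · exact hs' x hx y fun i hi => hxy i (Finset.mem_union_right _ hi)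
  · intro x _
    obtain ⟨s, u, hu, hsub⟩ :=
      isOpen_pi_iff.1 ((isOpen_discrete {g x}).preimage hg) x rfl
    refine ⟨(s : Set ι).pi u, mem_nhdsWithin_of_mem_nhds
      ((isOpen_set_pi s.finite_toSet fun i hi => (hu i hi).1).mem_nhds fun i hi => (hu i hi).2),
      s, fun y hy z hyz => ?_⟩
    have hz : z ∈ (s : Set ι).pi u := fun i hi => hyz i hi ▸ hy i hi
    exact (hsub hy : g y = g x).trans (hsub hz : g z = g x).symm

end Topology

section GenericLimitSet

variable [TopologicalSpace A] {f : (ℤ → A) → (ℤ → A)}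

theorem realm_mono {Y Z : Set (ℤ → A)} (h : Y ⊆ Z) : realm f Y ⊆ realm f Z :=
  fun _ hx => hx.trans h

theorem realm_inter (Y Z : Set (ℤ → A)) : realm f (Y ∩ Z) = realm f Y ∩ realm f Z :=
  Set.ext fun _ => subset_inter_iff

theorem realm_compl_of_isClopen [CompactSpace A] {U : Set (ℤ → A)} (hU : IsClopen U) :
    realm f Uᶜ = ⋃ T : ℕ, {x | ∀ t ≥ T, f^[t] x ∉ U} := by
  ext x
  have hvisit : x ∉ realm f Uᶜ ↔ ∃ᶠ t in atTop, f^[t] x ∈ U := by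
    constructor
    · intro hx
      obtain ⟨y, hy, hyU⟩ := Set.not_subset.1 hx
      exact mapClusterPt_iff_frequently.1 hy U (hU.isOpen.mem_nhds (not_notMem.1 hyU))
    · intro hx hsub
      obtain ⟨y, hyU, hy⟩ := hU.isClosed.isCompact.exists_mapClusterPt_of_frequently hx
      exact hsub hy hyU
  rw [← not_iff_not, hvisit, frequently_atTop]
  simp

theorem disjoint_genLimitSet_iff [CompactSpace A] {U : Set (ℤ → A)} (hU : IsClopen U) :
    Disjoint (genLimitSet f) U ↔ realm f Uᶜ ∈ residual (ℤ → A) := by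
  constructor
  · intro h
    let 𝒞 : Set (Set (ℤ → A)) := {C | IsClosed C ∧ realm f C ∈ residual (ℤ → A)}
    have : Nonempty 𝒞 := ⟨univ, isClosed_univ, mem_of_superset univ_mem fun _ _ => subset_univ _⟩
    have hdir : Directed (· ⊇ ·) ((↑) : 𝒞 → Set (ℤ → A)) := fun C D =>
      ⟨⟨C.1 ∩ D.1, C.2.1.inter D.2.1, realm_inter C.1 D.1 ▸ inter_mem C.2.2 D.2.2⟩,
        inter_subset_left, inter_subset_right⟩
    have hempty : U ∩ ⋂ C : 𝒞, (C : Set (ℤ → A)) = ∅ := by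
      rw [← sInter_eq_iInter]
      exact h.symm.inter_eq
    obtain ⟨C, hC⟩ := hU.isClosed.isCompact.elim_directed_family_closed
      _ (fun C => C.2.1) hempty hdir
    exact mem_of_superset C.2.2
      (realm_mono (Set.disjoint_iff_inter_eq_empty.2 hC).subset_compl_left)
  · intro h
    have hsub : genLimitSet f ⊆ Uᶜ := sInter_subset_of_mem ⟨hU.isOpen.isClosed_compl, h⟩
    exact Set.subset_compl_iff_disjoint_right.1 hsub

theorem genLimitSet_inter_nonempty_iff [CompactSpace A] [R1Space A] (hf : Continuous f)
    {U : Set (ℤ → A)} (hU : IsClopen U) :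
    (genLimitSet f ∩ U).Nonempty ↔ ∃ V, IsOpen V ∧ V.Nonempty ∧ Enables f V U := by
  have hclosed (T : ℕ) : IsClosed {x | ∀ t ≥ T, f^[t] x ∉ U} := by
    simp only [Set.ofPred_forall]
    exact isClosed_biInter fun t _ => hU.isOpen.isClosed_compl.preimage (hf.iterate t)
  rw [← Set.not_disjoint_iff_nonempty_inter, disjoint_genLimitSet_iff hU,
    realm_compl_of_isClopen hU, iUnion_mem_residual_iff_dense_iUnion_interior hclosed,
    not_dense_iff_exists_disjoint]
  exact exists_congr fun V => and_congr_right fun hV =>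
    and_congr_right fun _ => (enables_iff_disjoint_iUnion_interior hV).symm

end GenericLimitSet

section Words

-- The body of `word` coerces the whole list `List.range n` to a list of integers.
theorem word_eq_map_range (x : ℤ → A) (i : ℤ) (n : ℕ) :
    word x i n = (List.range n).map fun k : ℕ => x (i + k) := by
  simp only [word, List.bind_eq_flatMap, List.pure_def, ← List.map_eq_flatMap, List.map_map,
    comp_def]

@[simp]
theorem length_word (x : ℤ → A) (i : ℤ) (n : ℕ) : (word x i n).length = n := by
  simp only [word_eq_map_range, List.length_map, List.length_range]

theorem word_add (x : ℤ → A) (i : ℤ) (m n : ℕ) :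
    word x i (m + n) = word x i m ++ word x (i + m) n := by
  simp only [word_eq_map_range, List.range_add, List.map_append, List.map_map, comp_def,
    Nat.cast_add, add_assoc]

theorem word_eq_word_iff {x y : ℤ → A} {i : ℤ} {n : ℕ} :
    word x i n = word y i n ↔ ∀ j, i ≤ j → j < i + n → x j = y j := by
  simp only [word_eq_map_range, List.map_inj_left, List.mem_range]
  constructor
  · intro h j hij hjn
    simpa only [Int.toNat_sub_of_le hij, add_sub_cancel] using h (j - i).toNat (by omega)
  · exact fun h k hk => h _ (by omega) (by omega)

theorem mem_cylinder_word_iff {x y : ℤ → A} {i : ℤ} {n : ℕ} :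
    y ∈ cylinder (word x i n) i ↔ ∀ j, i ≤ j → j < i + n → y j = x j := by
  rw [← word_eq_word_iff, cylinder, Set.mem_ofPred_eq, length_word]

theorem cylinder_append (u v : List A) (i : ℤ) :
    cylinder (u ++ v) i = cylinder u i ∩ cylinder v (i + u.length) := by
  ext x
  simp only [cylinder, Set.mem_inter_iff, Set.mem_ofPred_eq, List.length_append, word_add]
  exact ⟨fun h => List.append_inj h (length_word _ _ _), fun h => congrArg₂ _ h.1 h.2⟩

theorem cylinder_append_append_subset (u v w : List A) (i : ℤ) :
    cylinder (u ++ v ++ w) (i - u.length) ⊆ cylinder v i := by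
  rw [cylinder_append, cylinder_append, sub_add_cancel]
  exact fun _ hx => hx.1.2

theorem cylinder_nonempty [Nonempty A] (w : List A) (i : ℤ) : (cylinder w i).Nonempty := by
  inhabit A
  refine ⟨fun j => w.getD (j - i).toNat default, ?_⟩
  refine List.ext_getElem (length_word _ _ _) fun k _ hk => ?_
  simp [word_eq_map_range, hk]

variable [TopologicalSpace A]

theorem exists_forall_cylinder_word_subset {O : Set (ℤ → A)} (hO : IsOpen O) {x : ℤ → A}
    (hx : x ∈ O) :
    ∃ m : ℕ, ∀ (i : ℤ) (n : ℕ), i ≤ -m → m < i + n → cylinder (word x i n) i ⊆ O := by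
  obtain ⟨s, u, hu, hsub⟩ := isOpen_pi_iff.1 hO x hx
  refine ⟨s.sup Int.natAbs, fun i n hi hn y hy => hsub fun j hj => ?_⟩
  have hjs : j.natAbs ≤ s.sup Int.natAbs := Finset.le_sup (f := Int.natAbs) hj
  rw [mem_cylinder_word_iff.1 hy j (by omega) (by omega)]
  exact (hu j hj).2

theorem exists_cylinder_append_append_subset {O : Set (ℤ → A)} (hO : IsOpen O) {x : ℤ → A}
    (hx : x ∈ O) {u : List A} {i : ℤ} (hu : x ∈ cylinder u i) :
    ∃ a b : List A, cylinder (a ++ u ++ b) (i - a.length) ⊆ O := by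
  obtain ⟨m, hm⟩ := exists_forall_cylinder_word_subset hO hx
  obtain ⟨k, hk⟩ : ∃ k : ℕ, k = m + i.natAbs + 1 := ⟨_, rfl⟩
  refine ⟨word x (i - k) k, word x (i + u.length) k, ?_⟩
  have hword : word x (i - k) k ++ u ++ word x (i + u.length) k =
      word x (i - k) (k + u.length + k) := by
    rw [add_assoc, word_add, word_add, sub_add_cancel, show word x i u.length = u from hu,
      List.append_assoc]
  rw [hword, length_word]
  exact hm _ _ (by omega) (by push_cast; omega)

variable [DiscreteTopology A]

theorem isClopen_cylinder (w : List A) (i : ℤ) : IsClopen (cylinder w i) := by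
  induction w generalizing i with
  | nil =>
    have hnil : cylinder ([] : List A) i = univ := by simp [cylinder, word_eq_map_range]
    exact hnil ▸ isClopen_univ
  | cons a w ih =>
    rw [← List.singleton_append, cylinder_append]
    refine .inter ?_ (ih _)
    have : cylinder [a] i = (fun x => x i) ⁻¹' {a} := by
      ext x; simp [cylinder, word_eq_map_range]
    exact this ▸ (isClopen_discrete {a}).preimage (continuous_apply i)

theorem enables_cylinder_iff [Nonempty A] {f : (ℤ → A) → (ℤ → A)} {u : List A} {i : ℤ}
    {U : Set (ℤ → A)} :
    Enables f (cylinder u i) U ↔ ∀ a b : List A,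
      ∃ᶠ t in atTop, (cylinder (a ++ u ++ b) (i - a.length) ∩ f^[t] ⁻¹' U).Nonempty := by
  constructor
  · exact fun h a b => h _ (cylinder_append_append_subset a u b i) (isClopen_cylinder _ _).isOpen
      (cylinder_nonempty _ _)
  · intro h W hWu hW ⟨x, hx⟩
    obtain ⟨a, b, hab⟩ := exists_cylinder_append_append_subset hW hx (hWu hx)
    exact (h a b).mono fun t ht => ht.mono (inter_subset_inter_left _ hab)

theorem mem_lang_genLimitSet_iff [Finite A] [Nonempty A] {f : (ℤ → A) → (ℤ → A)}
    (hf : Continuous f) {w : List A} :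
    w ∈ lang (genLimitSet f) ↔ ∃ (i : ℤ) (u : List A) (p : ℕ), ∀ a b : List A, ∃ᶠ t in atTop,
      (cylinder (a ++ u ++ b) (i - p - a.length) ∩ f^[t] ⁻¹' cylinder w i).Nonempty := by
  have hoccurs : w ∈ lang (genLimitSet f) ↔ ∃ i : ℤ, (genLimitSet f ∩ cylinder w i).Nonempty :=
    ⟨fun ⟨x, hx, i, hi⟩ => ⟨i, x, hx, hi⟩, fun ⟨i, x, hx, hi⟩ => ⟨x, hx, i, hi⟩⟩
  simp only [hoccurs, ← enables_cylinder_iff]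
  refine exists_congr fun i => ?_
  rw [genLimitSet_inter_nonempty_iff hf (isClopen_cylinder w i)]
  constructor
  · rintro ⟨V, hV, ⟨x, hx⟩, henables⟩
    obtain ⟨m, hm⟩ := exists_forall_cylinder_word_subset hV hx
    -- Starting the window left of both `-m` and `i` makes its offset from `i` a natural number.
    let p := m + i.natAbs
    exact ⟨word x (i - p) (2 * p + 1), p, henables.mono (hm _ _ (by omega) (by push_cast; omega))⟩
  · rintro ⟨u, p, henables⟩
    exact ⟨_, (isClopen_cylinder _ _).isOpen, cylinder_nonempty _ _, henables⟩

end Words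

section LocalRule

/-- The map `f` is the sliding block code of radius `r` given by the local rule `g`; the `k`-th
argument of `g` is the cell at offset `k - r`. -/
def IsLocalRule (f : (ℤ → A) → (ℤ → A)) (r : ℕ) (g : (Fin (2 * r + 1) → A) → A) : Prop :=
  ∀ x i, f x i = g fun k => x (i - r + (k : ℕ))

theorem iterate_shift_apply (x : ℤ → A) (n : ℕ) (i : ℤ) : shift^[n] x i = x (i + n) := by
  induction n generalizing x with
  | zero => simp
  | succ n ih => simp [ih, shift, add_assoc]

theorem apply_eq_of_comp_shift {f : (ℤ → A) → (ℤ → A)} (hf : f ∘ shift = shift ∘ f)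
    (x : ℤ → A) (i : ℤ) : f x i = f (fun j => x (i + j)) 0 := by
  have hcomm (n : ℕ) (y : ℤ → A) : f (shift^[n] y) = shift^[n] (f y) :=
    (Function.Semiconj.iterate_right (f := f) (fun y => congrFun hf y) n) y
  obtain ⟨n, rfl | rfl⟩ := i.eq_nat_or_neg
  · have hx : (fun j => x (n + j)) = shift^[n] x := by
      funext j; rw [iterate_shift_apply, add_comm]
    rw [hx, hcomm, iterate_shift_apply, zero_add]
  · have hx : x = shift^[n] fun j => x (-n + j) := by
      funext j; rw [iterate_shift_apply, add_comm j, neg_add_cancel_left]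
    conv_lhs => rw [hx, hcomm, iterate_shift_apply, neg_add_cancel]

theorem IsCA.exists_isLocalRule [TopologicalSpace A] [DiscreteTopology A] [Finite A]
    {f : (ℤ → A) → (ℤ → A)} (hf : IsCA f) : ∃ r g, 0 < r ∧ IsLocalRule f r g := by
  obtain ⟨s, hs⟩ := exists_finset_dependsOn ((continuous_apply (0 : ℤ)).comp hf.1)
  obtain ⟨r, hr⟩ : ∃ r : ℕ, r = s.sup Int.natAbs + 1 := ⟨_, rfl⟩
  let extend (v : Fin (2 * r + 1) → A) (j : ℤ) : A := v (Fin.ofNat _ (j + r).toNat)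
  refine ⟨r, fun v => f (extend v) 0, by omega, fun x i => ?_⟩
  rw [apply_eq_of_comp_shift hf.2]
  refine hs fun j hj => ?_
  have hjr : j.natAbs ≤ s.sup Int.natAbs := Finset.le_sup (f := Int.natAbs) hj
  have hmod : (j + r).toNat % (2 * r + 1) = (j + r).toNat := Nat.mod_eq_of_lt (by omega)
  simp only [extend, Fin.val_ofNat, hmod]
  congr 1
  omega

variable [Inhabited A] {f : (ℤ → A) → (ℤ → A)} {r : ℕ} {g : (Fin (2 * r + 1) → A) → A}

/-- The action of a local rule of radius `r` on words, which shortens them by `r` letters at either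
end. The default letter is never read. -/
def blockMap (r : ℕ) (g : (Fin (2 * r + 1) → A) → A) (l : List A) : List A :=
  (List.range (l.length - 2 * r)).map fun i => g fun k => l.getD (i + (k : ℕ)) default

theorem primrec_blockMap [Primcodable A] [Finite A] (g : (Fin (2 * r + 1) → A) → A) :
    Primrec (blockMap r g) := by
  refine Primrec.list_map (Primrec.list_range.comp
    (Primrec.nat_sub.comp Primrec.list_length (Primrec.const _))) ?_
  refine (Primrec.dom_finite g).comp ?_
  rw [Primrec.fin_curry]
  exact (Primrec.list_getD default).comp (Primrec.fst.comp Primrec.fst)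
    (Primrec.nat_add.comp (Primrec.snd.comp Primrec.fst) (Primrec.fin_val.comp Primrec.snd))

theorem IsLocalRule.blockMap_word (hg : IsLocalRule f r g) (x : ℤ → A) (i : ℤ) (n : ℕ) :
    blockMap r g (word x i n) = word (f x) (i + r) (n - 2 * r) := by
  rw [blockMap, length_word, word_eq_map_range, word_eq_map_range]
  refine List.map_congr_left fun j hj => ?_
  have hjn : j < n - 2 * r := List.mem_range.1 hj
  rw [hg]
  congr 1
  funext k
  have hkn : j + k < n := by omega
  rw [List.getD_eq_getElem _ _ (by simpa using hkn), List.getElem_map, List.getElem_range]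
  congr 1
  push_cast
  ring

theorem IsLocalRule.iterate_blockMap_word (hg : IsLocalRule f r g) (t : ℕ) (x : ℤ → A) (i : ℤ)
    (n : ℕ) :
    (blockMap r g)^[t] (word x i n) = word (f^[t] x) (i + r * t) (n - 2 * (r * t)) := by
  induction t generalizing x i n with
  | zero => simp
  | succ t ih =>
    rw [iterate_succ_apply, iterate_succ_apply, hg.blockMap_word, ih]
    congr 1
    · push_cast; ring
    · rw [Nat.sub_sub]; congr 1; ring

/-- The extension `c v d` of the word `v` is mapped to `w` in `t` steps, where `c` has the length
that puts `v` at `q` cells to the left of `w`. -/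
def IsPreimageExtension (r : ℕ) (g : (Fin (2 * r + 1) → A) → A) (t q : ℕ) (v w c d : List A) :
    Prop :=
  r * t = q + c.length ∧ (blockMap r g)^[t] (c ++ v ++ d) = w

theorem primrecPred_isPreimageExtension [Primcodable A] [Finite A]
    (g : (Fin (2 * r + 1) → A) → A) :
    PrimrecPred fun x : ℕ × ℕ × List A × List A × List A × List A =>
      IsPreimageExtension r g x.1 x.2.1 x.2.2.1 x.2.2.2.1 x.2.2.2.2.1 x.2.2.2.2.2 := by
  have h₂ : Primrec fun x : ℕ × ℕ × List A × List A × List A × List A => x.2.2 :=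
    Primrec.snd.comp Primrec.snd
  have h₄ := Primrec.snd.comp (Primrec.snd.comp h₂)
  have hc := Primrec.fst.comp h₄
  have hword := Primrec.list_append.comp
    (Primrec.list_append.comp hc (Primrec.fst.comp h₂)) (Primrec.snd.comp h₄)
  refine .and ?_ ?_
  · exact Primrec.eq.comp (Primrec.nat_mul.comp (Primrec.const r) Primrec.fst)
      (Primrec.nat_add.comp (Primrec.fst.comp Primrec.snd) (Primrec.list_length.comp hc))
  · exact Primrec.eq.comp
      (Primrec.nat_iterate Primrec.fst hword ((primrec_blockMap g).comp Primrec.snd))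
      (Primrec.fst.comp (Primrec.snd.comp h₂))

theorem IsLocalRule.cylinder_inter_preimage_nonempty (hg : IsLocalRule f r g) {t q : ℕ}
    {v w c d : List A} (h : IsPreimageExtension r g t q v w c d) (i : ℤ) :
    (cylinder v (i - q) ∩ f^[t] ⁻¹' cylinder w i).Nonempty := by
  obtain ⟨hc, hw⟩ := h
  obtain ⟨x, hx⟩ := cylinder_nonempty (c ++ v ++ d) (i - q - c.length)
  refine ⟨x, cylinder_append_append_subset c v d _ hx, ?_⟩
  have hword := hg.iterate_blockMap_word t x (i - q - c.length) (c ++ v ++ d).length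
  have hpos : i - q - c.length + r * t = i := by rw [← Nat.cast_mul, hc]; push_cast; ring
  rw [show word x _ (c ++ v ++ d).length = c ++ v ++ d from hx, hw, hpos] at hword
  rw [hword]
  exact congrArg (word (f^[t] x) i) (length_word _ _ _)

theorem IsLocalRule.exists_isPreimageExtension (hg : IsLocalRule f r g) {t q : ℕ} {v w : List A}
    {i : ℤ} (hne : (cylinder v (i - q) ∩ f^[t] ⁻¹' cylinder w i).Nonempty)
    (ht : q + v.length ≤ r * t) :
    ∃ c d, IsPreimageExtension r g t q v w c d := by
  obtain ⟨x, hxv, hxw⟩ := hne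
  obtain ⟨m, hm⟩ := Nat.exists_eq_add_of_le (Nat.le_of_add_right_le ht)
  obtain ⟨n, hn⟩ : ∃ n, m + v.length + n = w.length + 2 * (r * t) :=
    ⟨w.length + 2 * (r * t) - (m + v.length), by omega⟩
  have hposv : i - ↑(r * t) + m = i - q := by omega
  refine ⟨word x (i - ↑(r * t)) m, word x (i - q + v.length) n,
    by rw [length_word, hm], ?_⟩
  have hword : word x (i - ↑(r * t)) (m + v.length + n) =
      word x (i - ↑(r * t)) m ++ v ++ word x (i - q + v.length) n := by
    rw [add_assoc, word_add, word_add, hposv, show word x (i - q) v.length = v from hxv,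
      List.append_assoc]
  rw [← hword, hg.iterate_blockMap_word, hn, Nat.add_sub_cancel, ← Nat.cast_mul, sub_add_cancel]
  exact hxw

theorem IsLocalRule.frequently_cylinder_inter_preimage_nonempty_iff (hg : IsLocalRule f r g)
    (hr : 0 < r) {v w : List A} {q : ℕ} {i : ℤ} :
    (∃ᶠ t in atTop, (cylinder v (i - q) ∩ f^[t] ⁻¹' cylinder w i).Nonempty) ↔
      ∃ᶠ t in atTop, ∃ c d, IsPreimageExtension r g t q v w c d := by
  refine frequently_congr ((eventually_ge_atTop (q + v.length)).mono fun t ht => ?_)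
  exact ⟨fun h => hg.exists_isPreimageExtension h (ht.trans (Nat.le_mul_of_pos_left t hr)),
    fun ⟨_, _, h⟩ => hg.cylinder_inter_preimage_nonempty h i⟩

theorem IsLocalRule.mem_lang_genLimitSet_iff [TopologicalSpace A] [DiscreteTopology A] [Finite A]
    (hg : IsLocalRule f r g) (hr : 0 < r) (hf : Continuous f) {w : List A} :
    w ∈ lang (genLimitSet f) ↔ ∃ (u : List A) (p : ℕ), ∀ (a b : List A) (T : ℕ), ∃ t ≥ T,
      ∃ c d, IsPreimageExtension r g t (p + a.length) (a ++ u ++ b) w c d := by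
  simp only [Gls.mem_lang_genLimitSet_iff hf, sub_sub, ← Nat.cast_add,
    hg.frequently_cylinder_inter_preimage_nonempty_iff hr, exists_const, frequently_atTop]

theorem sigmaPred_three_isPreimageExtension [Primcodable A] [Finite A]
    (g : (Fin (2 * r + 1) → A) → A) :
    SigmaPred 3 fun w : List A => ∃ (u : List A) (p : ℕ), ∀ (a b : List A) (T : ℕ), ∃ t ≥ T,
      ∃ c d, IsPreimageExtension r g t (p + a.length) (a ++ u ++ b) w c d := by
  let Q (w : List A) (k : List A × ℕ) (l : List A × List A × ℕ) (m : ℕ × List A × List A) : Prop :=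
    m.1 ≥ l.2.2 ∧
      IsPreimageExtension r g m.1 (k.2 + l.1.length) (l.1 ++ k.1 ++ l.2.1) w m.2.1 m.2.2
  let X := ((List A × List A × ℕ) × List A × List A × ℕ) × ℕ × List A × List A
  have hQ : PrimrecPred fun x : X => Q x.1.1.1 x.1.1.2 x.1.2 x.2 := by
    have hw : Primrec fun x : X => x.1.1.1 := Primrec.fst.comp (Primrec.fst.comp Primrec.fst)
    have hk : Primrec fun x : X => x.1.1.2 := Primrec.snd.comp (Primrec.fst.comp Primrec.fst)
    have hl : Primrec fun x : X => x.1.2 := Primrec.snd.comp Primrec.fst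
    have hm : Primrec fun x : X => x.2 := Primrec.snd
    have ha := Primrec.fst.comp hl
    have hbT := Primrec.snd.comp hl
    have hq := Primrec.nat_add.comp (Primrec.snd.comp hk) (Primrec.list_length.comp ha)
    have hv := Primrec.list_append.comp
      (Primrec.list_append.comp ha (Primrec.fst.comp hk)) (Primrec.fst.comp hbT)
    exact (Primrec.nat_le.comp (Primrec.snd.comp hbT) (Primrec.fst.comp hm)).and
      ((primrecPred_isPreimageExtension g).comp ((Primrec.fst.comp hm).pair
        (hq.pair (hv.pair (hw.pair (Primrec.snd.comp hm))))))
  simpa only [Q, Prod.exists, Prod.forall, exists_and_left] using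
    SigmaPred.exists_forall_exists hQ.computablePred

end LocalRule

/-- the language of the generic limit set of any CA is `Σ⁰₃`. -/
theorem stmt4 [Fintype A] [Primcodable A] [TopologicalSpace A] [DiscreteTopology A]
    (f : (ℤ → A) → (ℤ → A)) (hf : IsCA f) :
    SigmaLang 3 (lang (genLimitSet f)) := by
  change SigmaPred 3 fun w => w ∈ lang (genLimitSet f)
  cases isEmpty_or_nonempty A with
  | inl hA =>
    have hempty (w : List A) : w ∉ lang (genLimitSet f) := fun ⟨x, _⟩ => hA.elim (x 0)
    have hfalse : ComputablePred fun _ : ((List A × ℕ) × ℕ) × ℕ => False :=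
      Computable.computablePred (Computable.const _)
    simpa [hempty] using SigmaPred.exists_forall_exists (Q := fun _ _ _ _ => False) hfalse
  | inr hA =>
    inhabit A
    obtain ⟨r, g, hr, hg⟩ := hf.exists_isLocalRule
    simpa only [hg.mem_lang_genLimitSet_iff hr hf.1] using sigmaPred_three_isPreimageExtension g

end Gls
end

section
/- For every Σ⁰₃ set P ⊆ A* over a finite alphabet A, there exist a finite alphabet B, a cellular automaton f on B^ℤ, and a total computable function φ : A* → B* such that for all w ∈ A*: w ∈ P if and only if φ(w) ∈ L(ω̃(f)). In particular, P is many-one reducible to the language of the generic limit set of f. -/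
open Filter Set Function

namespace Gls

variable {A : Type*}

/-! A `Σ⁰₃` predicate has the form `∃ k, ∀ a, S ((n, k), a)` with `S` recursively enumerable and
antitone in `a`, and some machine accepts the word `1ⁿ⁺¹ 0 1ᵏ 0 z` if and only if `S ((n, k), |z|)`.
The automaton has verifier cells. Signals coming from the left rearm a verifier and start it on the
input to its right, which ends at the first fresh cell, and a verifier shows when it has accepted.
The word in question is an accepting verifier followed by `1ⁿ⁺¹ 0`.

In a generic configuration there are signals arbitrarily far to the left, so a verifier that shows
acceptance infinitely often is started infinitely often. A fresh cell that ends an input is used up,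
so the inputs that are accepted get longer and longer. Generically they all begin with
`1ⁿ⁺¹ 0 1ᵏ 0` for one and the same `k`, so `S ((n, k), a)` holds for arbitrarily large `a`, hence
for all `a`.

Conversely, if `S ((n, k), a)` holds for all `a`, then every configuration with an accepting
verifier followed by `1ⁿ⁺¹ 0 1ᵏ 0` can be modified far from the origin so that the same word
reappears arbitrarily late. So a generic configuration in the cylinder of that word sees it
infinitely often. -/

section RePred

variable {α β : Type*} [Primcodable α] [Primcodable β]

theorem rePred_exists {R : α × ℕ → Prop} (hR : ComputablePred R) :
    REPred fun a => ∃ n, R (a, n) := by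
  obtain ⟨_, hR⟩ := hR
  have hsearch : Partrec fun a => Nat.rfind fun n => Part.some (decide (R (a, n))) :=
    Partrec.rfind hR.partrec
  refine hsearch.dom_re.of_eq fun a => Nat.rfind_dom.trans
    ⟨fun ⟨n, hn, _⟩ => ⟨n, by simpa using hn⟩, fun ⟨n, hn⟩ => ⟨n, by simpa using hn, ?_⟩⟩
  exact fun _ => trivial

theorem rePred_forall_lt {S : α × ℕ → Prop} (hS : REPred S) :
    REPred fun x : α × ℕ => ∀ m < x.2, S (x.1, m) := by
  have hloop : Partrec fun x : α × ℕ => (x.2.rec (Part.some ()) fun m run =>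
      run.bind fun _ => Part.assert (S (x.1, m)) fun _ => Part.some () : Part Unit) :=
    Partrec.nat_rec Computable.snd (Computable.const ()).partrec
      (hS.comp ((Computable.fst.comp Computable.fst).pair
        (Computable.fst.comp Computable.snd))).to₂
  refine hloop.dom_re.of_eq fun ⟨a, N⟩ => ?_
  induction N with
  | zero => simp
  | succ N ih =>
    simp only [Part.bind_dom, ih, exists_prop, Nat.lt_succ_iff_lt_or_eq, or_imp, forall_and,
      forall_eq]
    simp [Part.assert]

theorem rePred_image {e : α → β} (he : Computable e) (hinj : Injective e) {S : α → Prop}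
    (hS : REPred S) : REPred fun b => ∃ a, e a = b ∧ S a := by
  classical
  let search : β → ℕ → Option α := fun b m =>
    (Encodable.decode m).bind fun a => bif decide (e a = b) then some a else none
  have hsearch : Computable₂ search :=
    (Computable.decode.comp Computable.snd).option_bind <| Computable.to₂ <|
      Computable.cond (Primrec.eq.decide.to_comp.comp (he.comp Computable.snd)
        (Computable.fst.comp Computable.fst))
        (Computable.option_some.comp Computable.snd) (Computable.const none)
  have mem_search {a b m} : a ∈ search b m ↔ Encodable.decode m = some a ∧ e a = b := by
    simp only [search, Option.mem_def, Option.bind_eq_some_iff, cond_eq_ite, decide_eq_true_eq]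
    grind
  have mem_rfindOpt {a b} : a ∈ Nat.rfindOpt (search b) ↔ e a = b := by
    refine ⟨fun h => ?_, ?_⟩
    · obtain ⟨m, hm⟩ := Nat.rfindOpt_spec h
      exact (mem_search.1 hm).2
    · rintro rfl
      have hdom : (Nat.rfindOpt (search (e a))).Dom :=
        Nat.rfindOpt_dom.2 ⟨_, a, mem_search.2 ⟨Encodable.encodek a, rfl⟩⟩
      obtain ⟨a', ha'⟩ := Part.dom_iff_mem.1 hdom
      obtain ⟨m, hm⟩ := Nat.rfindOpt_spec ha'
      rwa [hinj (mem_search.1 hm).2] at ha'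
  have hrun : Partrec fun b => (Nat.rfindOpt (search b)).bind fun a =>
      Part.assert (S a) fun _ => Part.some () :=
    (Partrec.rfindOpt hsearch).bind (hS.comp Computable.snd).to₂
  refine hrun.dom_re.of_eq fun b => ?_
  simp [Part.dom_iff_mem, mem_rfindOpt]

end RePred

theorem NatSigma.exists_rePred_antitone {p : ℕ → Prop} (hp : NatSigma 3 p) :
    ∃ S : (ℕ × ℕ) × ℕ → Prop, REPred S ∧ (∀ n k, Antitone fun a => S ((n, k), a)) ∧
      ∀ n, p n ↔ ∃ k, ∀ a, S ((n, k), a) := by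
  obtain ⟨R₁, ⟨R₂, ⟨R₃, hR₃, h₂⟩, h₁⟩, h₀⟩ := hp
  have hcode : Computable fun x : ((ℕ × ℕ) × ℕ) × ℕ =>
      Nat.pair (Nat.pair (Nat.pair x.1.1.1 x.1.1.2) x.1.2) x.2 :=
    have pair := Primrec₂.natPair
    (pair.comp (pair.comp (pair.comp (Primrec.fst.comp (Primrec.fst.comp Primrec.fst))
      (Primrec.snd.comp (Primrec.fst.comp Primrec.fst))) (Primrec.snd.comp Primrec.fst))
      Primrec.snd).to_comp
  obtain ⟨_, hR₃'⟩ : ComputablePred R₃ := hR₃.not.of_eq fun _ => not_not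
  have hR₁ (a : ℕ) : R₁ a ↔ ∀ m, ∃ b, R₃ (Nat.pair (Nat.pair a m) b) :=
    (not_iff_comm.1 (h₁ a)).symm.trans (not_exists.trans (forall_congr' fun m => h₂ _))
  refine ⟨_, rePred_forall_lt (rePred_exists ⟨_, hR₃'.comp hcode⟩), ?_, fun n => ?_⟩
  · exact fun n k a a' haa' h m hm => h m (hm.trans_le haa')
  · simp only [h₀, hR₁]
    exact exists_congr fun k => ⟨fun h _ m _ => h m, fun h m => h _ m m.lt_succ_self⟩

section BinaryCode

/-- The number with binary expansion `u`, most significant bit first. -/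
def binaryValue (u : List Bool) : ℕ := u.foldl (fun a b => Nat.bit b a) 0

/-- The unary encoding `1ⁿ⁺¹ 0 1ᵏ 0` of the pair `(n, k)`, followed by the padding `z`. Only the
length of the padding will matter. -/
def queryWord (n k : ℕ) (z : List Bool) : List Bool :=
  List.replicate (n + 1) true ++ false :: (List.replicate k true ++ false :: z)

theorem queryWord_eq_cons (n k : ℕ) (z : List Bool) : queryWord n k z =
    true :: (List.replicate n true ++ false :: (List.replicate k true ++ false :: z)) := by
  simp [queryWord, List.replicate_succ]

theorem binaryValue_append_singleton (u : List Bool) (b : Bool) :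
    binaryValue (u ++ [b]) = Nat.bit b (binaryValue u) := by
  simp [binaryValue]

theorem binaryValue_cons_true_ne_zero (u : List Bool) : binaryValue (true :: u) ≠ 0 := by
  induction u using List.reverseRecOn with
  | nil => simp [binaryValue]
  | append_singleton u b ih =>
    rw [← List.cons_append, binaryValue_append_singleton]
    simp [Nat.bit_eq_zero_iff, ih]

theorem bits_binaryValue_cons_true (u : List Bool) :
    Nat.bits (binaryValue (true :: u)) = (true :: u).reverse := by
  induction u using List.reverseRecOn with
  | nil => simp [binaryValue]
  | append_singleton u b ih =>
    rw [← List.cons_append, binaryValue_append_singleton,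
      Nat.bits_append_bit _ _ fun h => absurd h (binaryValue_cons_true_ne_zero u), ih]
    simp

theorem eq_and_eq_of_replicate_append_cons_eq {α : Type*} {a b : α} (hab : a ≠ b) {m n : ℕ}
    {l l' : List α}
    (h : List.replicate m a ++ b :: l = List.replicate n a ++ b :: l') : m = n ∧ l = l' := by
  induction m generalizing n with
  | zero => cases n <;> simp_all [List.replicate_succ, hab.symm]
  | succ m ih =>
    cases n with
    | zero => simp [List.replicate_succ, hab] at h
    | succ n => simpa using ih (by simpa [List.replicate_succ] using h)

theorem binaryValue_queryWord_injective :
    Injective fun x : (ℕ × ℕ) × List Bool => binaryValue (queryWord x.1.1 x.1.2 x.2) := by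
  rintro ⟨⟨n, k⟩, z⟩ ⟨⟨n', k'⟩, z'⟩ h
  have hword : queryWord n k z = queryWord n' k' z' := by
    apply List.reverse_injective
    simp only [queryWord_eq_cons, ← bits_binaryValue_cons_true]
    simp only [← queryWord_eq_cons, h]
  obtain ⟨hn, hrest⟩ := eq_and_eq_of_replicate_append_cons_eq (by simp) hword
  obtain ⟨rfl, rfl⟩ := eq_and_eq_of_replicate_append_cons_eq (by simp) hrest
  obtain rfl : n = n' := Nat.succ_injective hn
  rfl

theorem primrec_replicate {α : Type*} [Primcodable α] (c : α) :
    Primrec fun n => List.replicate n c :=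
  (Primrec.list_map Primrec.list_range (Primrec.const c).to₂).of_eq fun n => by
    simp [List.map_const']

theorem primrec_binaryValue : Primrec binaryValue := by
  have hdouble : Primrec fun p : List Bool × ℕ × Bool => 2 * p.2.1 :=
    Primrec.nat_mul.comp (Primrec.const 2) (Primrec.fst.comp Primrec.snd)
  have hbit : Primrec fun p : List Bool × ℕ × Bool => Nat.bit p.2.2 p.2.1 :=
    (Primrec.cond (Primrec.snd.comp Primrec.snd) (Primrec.succ.comp hdouble) hdouble).of_eq
      fun ⟨_, a, b⟩ => by cases b <;> simp [Nat.bit]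
  exact Primrec.list_foldl Primrec.id (Primrec.const 0) hbit.to₂

theorem primrec_queryWord :
    Primrec fun x : (ℕ × ℕ) × List Bool => queryWord x.1.1 x.1.2 x.2 := by
  have hfalse := Primrec.const (α := (ℕ × ℕ) × List Bool) false
  have hk := (primrec_replicate true).comp
    (Primrec.snd.comp (Primrec.fst (α := ℕ × ℕ) (β := List Bool)))
  have hn := (primrec_replicate true).comp
    (Primrec.succ.comp (Primrec.fst.comp (Primrec.fst (α := ℕ × ℕ) (β := List Bool))))
  exact Primrec.list_append.comp hn (Primrec.list_cons.comp hfalse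
    (Primrec.list_append.comp hk (Primrec.list_cons.comp hfalse Primrec.snd)))

theorem exists_rePred_binaryValue_queryWord {S : (ℕ × ℕ) × ℕ → Prop} (hS : REPred S) :
    ∃ L : ℕ → Prop, REPred L ∧
      ∀ n k z, L (binaryValue (queryWord n k z)) ↔ S ((n, k), z.length) := by
  have hlength : Computable fun x : (ℕ × ℕ) × List Bool => (x.1, x.2.length) :=
    (Primrec.fst.pair (Primrec.list_length.comp Primrec.snd)).to_comp
  refine ⟨_, rePred_image (primrec_binaryValue.comp primrec_queryWord).to_comp
    binaryValue_queryWord_injective (hS.comp hlength), fun n k z => ?_⟩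
  constructor
  · rintro ⟨x, hx, h⟩
    obtain rfl : x = ((n, k), z) := binaryValue_queryWord_injective hx
    exact h
  · exact fun h => ⟨((n, k), z), rfl, h⟩

end BinaryCode

section TuringMachine

open Turing Turing.ToPartrec Turing.PartrecToTM2

theorem exists_finite_tm0_of_supports {Γ Λ : Type*} [Inhabited Γ] [Inhabited Λ]
    (M : TM0.Machine Γ Λ) {S : Set Λ} (hfin : S.Finite) (hS : TM0.Supports M S) :
    ∃ (_ : Inhabited S) (_ : Finite S) (M' : TM0.Machine Γ S),
      ∀ l, (TM0.eval M' l).Dom ↔ (TM0.eval M l).Dom := by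
  classical
  have : Finite S := hfin
  let _ : Inhabited S := ⟨⟨default, hS.1⟩⟩
  let retract : PointedMap Λ S := ⟨fun q => if h : q ∈ S then ⟨q, h⟩ else default, dif_pos hS.1⟩
  let idΓ : PointedMap Γ Γ := ⟨id, rfl⟩
  have hretract : ∀ q ∈ S, (retract q : Λ) = q := fun q hq =>
    congrArg Subtype.val (dif_pos hq : (if h : q ∈ S then (⟨q, h⟩ : S) else default) = ⟨q, hq⟩)
  refine ⟨inferInstance, this, M.map idΓ idΓ retract Subtype.val, fun l => ?_⟩
  refine StateTransition.tr_eval_dom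
    (TM0.Machine.map_respects M idΓ idΓ retract Subtype.val hS (fun _ => rfl) hretract)
    ⟨hS.1, ?_⟩
  rw [TM0.map_init]
  exact congrArg TM0.init (List.map_id l)

/-- The symbol by which `Turing.PartrecToTM2` writes a binary digit. -/
def bitSymbol (b : Bool) : Γ' := bif b then Γ'.bit1 else Γ'.bit0

theorem trPosNum_eq_map_bits (p : PosNum) : trPosNum p = (Nat.bits p).map bitSymbol := by
  induction p with
  | one => simp [trPosNum, bitSymbol]
  | bit0 p ih =>
    rw [trPosNum, ih, PosNum.cast_bit0, ← two_mul, Nat.bit0_bits _ (PosNum.cast_pos p).ne']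
    rfl
  | bit1 p ih =>
    rw [trPosNum, ih, PosNum.cast_bit1, ← two_mul, Nat.bit1_bits]
    rfl

theorem trNat_eq_map_bits (n : ℕ) : trNat n = (Nat.bits n).map bitSymbol := by
  have htrNum : ∀ m : Num, trNum m = (Nat.bits m).map bitSymbol
    | .zero => by simp [trNum]
    | .pos p => trPosNum_eq_map_bits p
  simpa only [trNat, Num.to_of_nat] using htrNum n

theorem trInit_of_reverse_eq_cons {K : Type*} [DecidableEq K] {Γ : K → Type*} (k : K)
    {l l' : List (Γ k)} {a : Γ k} (h : l.reverse = a :: l') :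
    TM2to1.trInit k l = (true, update (fun _ => none) k (some a)) ::
      l'.map fun a => (false, update (fun _ => none) k (some a)) := by
  simp only [TM2to1.trInit, h]
  rfl

/-- The alphabet of the one-tape machine that simulates the four stacks of
`Turing.PartrecToTM2`. -/
abbrev TapeSymbol : Type := TM2to1.Γ' K' fun _ => PartrecToTM2.Γ'

theorem finite_tapeSymbol : Finite TapeSymbol := by
  let _ : Fintype K' := ⟨{K'.main, K'.rev, K'.aux, K'.stack}, by rintro (_ | _ | _ | _) <;> simp⟩
  exact inferInstanceAs (Finite (Bool × (K' → Option PartrecToTM2.Γ')))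

/-- The tape symbol with the symbol `a` on the main stack and nothing on the other stacks. -/
def onMainStack (isBottom : Bool) (a : PartrecToTM2.Γ') : TapeSymbol :=
  (isBottom, update (fun _ => none) K'.main (some a))

theorem trInit_trList_binaryValue (u : List Bool) :
    TM2to1.trInit K'.main (trList [binaryValue (true :: u)]) =
      onMainStack true Γ'.cons :: (true :: u).map fun b => onMainStack false (bitSymbol b) := by
  have hrev :
      (trList [binaryValue (true :: u)]).reverse = Γ'.cons :: (true :: u).map bitSymbol := by
    rw [trList, trList, trNat_eq_map_bits, bits_binaryValue_cons_true]
    simp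
  rw [trInit_of_reverse_eq_cons K'.main hrev, List.map_map]
  rfl

theorem tm2_eval_dom_iff (c : Code) (n : ℕ) :
    haveI : Inhabited Λ' := ⟨trNormal c Cont'.halt⟩
    (TM2.eval tr K'.main (trList [n])).Dom ↔ (c.eval [n]).Dom := by
  let _ : Inhabited Λ' := ⟨trNormal c Cont'.halt⟩
  have hinit : TM2.init K'.main (trList [n]) = PartrecToTM2.init c [n] := by
    simp only [TM2.init, PartrecToTM2.init]
    congr 1
    funext k
    cases k <;> rfl
  change (StateTransition.eval (TM2.step tr) (TM2.init K'.main (trList [n]))).Dom ↔ _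
  rw [hinit, PartrecToTM2.tr_eval]
  rfl

theorem exists_code_eval_dom_iff {L : ℕ → Prop} (hL : REPred L) :
    ∃ c : Code, ∀ n, (c.eval [n]).Dom ↔ L n := by
  have hpartrec : Partrec fun n => (Part.assert (L n) fun _ => Part.some ()).map fun _ => (0 : ℕ) :=
    hL.map (Computable.const 0).to₂
  obtain ⟨c, hc⟩ := Code.exists_code (Nat.Partrec'.part_iff₁.2 hpartrec)
  refine ⟨c, fun n => ?_⟩
  have hn : c.eval [n] = _ := hc ⟨[n], rfl⟩
  simp [hn, Part.assert, List.Vector.head]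

theorem exists_finite_tm0_of_rePred {L : ℕ → Prop} (hL : REPred L) :
    ∃ (Γ Q : Type) (_ : Inhabited Γ) (_ : Inhabited Q) (_ : Finite Γ) (_ : Finite Q)
      (M : TM0.Machine Γ Q) (marker : Γ) (digit : Bool → Γ), ∀ u,
        (TM0.eval M (marker :: (true :: u).map digit)).Dom ↔ L (binaryValue (true :: u)) := by
  obtain ⟨c, hc⟩ := exists_code_eval_dom_iff hL
  let _ : Inhabited Λ' := ⟨trNormal c Cont'.halt⟩
  have hsupports := TM1to0.tr_supports _ <| TM2to1.tr_supports _ <|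
    PartrecToTM2.tr_supports c Cont'.halt
  obtain ⟨_, _, M, hM⟩ := exists_finite_tm0_of_supports _ (Finset.finite_toSet _) hsupports
  refine ⟨TapeSymbol, _, inferInstance, _, finite_tapeSymbol, ‹_›, M, onMainStack true Γ'.cons,
    fun b => onMainStack false (bitSymbol b), fun u => ?_⟩
  rw [hM, ← trInit_trList_binaryValue, TM1to0.tr_eval, ← hc, ← tm2_eval_dom_iff]
  exact TM2to1.tr_eval_dom tr K'.main _

end TuringMachine

/-- The global map of the two-sided cellular automaton of radius one with local rule `ρ`. -/
def localMap {C : Type*} (ρ : C → C → C → C) (x : ℤ → C) : ℤ → C :=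
  fun i => ρ (x (i - 1)) (x i) (x (i + 1))

/-- The global map of a one-sided cellular automaton: the cell `0` has no left neighbour, so it
follows a local rule `ρ₀` of its own. -/
def halfLineMap {W : Type*} (ρ : W → W → W → W) (ρ₀ : W → W → W) (y : ℕ → W) : ℕ → W
  | 0 => ρ₀ (y 0) (y 1)
  | j + 1 => ρ (y j) (y (j + 1)) (y (j + 2))

theorem halfLineMap_iterate_congr {W : Type*} (ρ : W → W → W → W) (ρ₀ : W → W → W)
    {y y' : ℕ → W} {t j : ℕ} (h : ∀ i ≤ j + t, y i = y' i) :
    (halfLineMap ρ ρ₀)^[t] y j = (halfLineMap ρ ρ₀)^[t] y' j := by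
  induction t generalizing j with
  | zero => exact h j le_rfl
  | succ t ih =>
    have ih' : ∀ i ≤ j + 1, (halfLineMap ρ ρ₀)^[t] y i = (halfLineMap ρ ρ₀)^[t] y' i :=
      fun i hi => ih fun k hk => h k (by omega)
    rw [iterate_succ_apply', iterate_succ_apply']
    cases j with
    | zero => simp only [halfLineMap, ih' 0 (by omega), ih' 1 (by omega)]
    | succ j =>
      simp only [halfLineMap, ih' j (by omega), ih' (j + 1) (by omega), ih' (j + 2) (by omega)]

/-- A one-sided cellular automaton that works on words over `Bool`, with cell states `W`. The
symbol `sym none` fills the part of the row beyond the input. Only the cell `boot` at the origin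
may start a computation, and it takes at least one step to affect its neighbour. -/
structure RowMachine (W : Type*) where
  rule : W → W → W → W
  rule₀ : W → W → W
  boot : W
  sym : Option Bool → W
  accepting : W → Bool
  rule_sym : ∀ a b c, rule (sym a) (sym b) (sym c) = sym b
  rule_boot : ∀ b c, rule boot (sym b) (sym c) = sym b

namespace RowMachine

variable {W : Type*} (D : RowMachine W)

/-- The global map of a row machine. -/
def step : (ℕ → W) → ℕ → W := halfLineMap D.rule D.rule₀

/-- The initial row of a row machine whose tape symbols to the right of the origin are `s`. -/
def initialRow (s : ℕ → Option Bool) : ℕ → W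
  | 0 => D.boot
  | j + 1 => D.sym (s j)

/-- A row machine accepts a word if the cell at the origin ever enters an accepting state. -/
def Accepts (u : List Bool) : Prop := ∃ t, D.accepting (D.step^[t] (D.initialRow (u[·]?)) 0)

end RowMachine

section Fold

variable {C : Type*}

/-- A two-sided configuration, folded at the origin into a one-sided one. -/
def fold (x : ℤ → C) : ℕ → C × C := fun j => (x j, x (-1 - j))

/-- The local rule away from the origin of a folded cellular automaton. -/
def foldRule (ρ : C → C → C → C) (l c r : C × C) : C × C := (ρ l.1 c.1 r.1, ρ r.2 c.2 l.2)

/-- The local rule at the origin of a folded cellular automaton. -/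
def foldRule₀ (ρ : C → C → C → C) (c r : C × C) : C × C := (ρ c.2 c.1 r.1, ρ r.2 c.2 c.1)

theorem semiconj_fold (ρ : C → C → C → C) :
    Semiconj fold (localMap ρ) (halfLineMap (foldRule ρ) (foldRule₀ ρ)) := by
  intro x
  funext j
  cases j with
  | zero => simp [fold, localMap, halfLineMap, foldRule₀]
  | succ j =>
    have h₁ : ((j + 1 : ℕ) : ℤ) - 1 = j := by omega
    have h₂ : ((j + 1 : ℕ) : ℤ) + 1 = (j + 2 : ℕ) := by omega
    have h₃ : -1 - ((j + 1 : ℕ) : ℤ) - 1 = -1 - (j + 2 : ℕ) := by omega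
    have h₄ : -1 - ((j + 1 : ℕ) : ℤ) + 1 = -1 - j := by omega
    simp only [fold, localMap, halfLineMap, foldRule, h₁, h₂, h₃, h₄]

end Fold

section Simulation

open Turing

/-- The part of a cell that records the head of a simulated Turing machine: absent, about to
start, in state `q`, or halted. The `halted` mark spreads over the whole tape. -/
inductive Head (Q : Type*)
  | none
  | start
  | run (q : Q)
  | halted
  deriving Fintype

variable {Γ Q : Type*} [Inhabited Q] (M : TM0.Machine Γ Q)

/-- The head sent by a cell to its neighbour in direction `d`. -/
def emittedHead (d : Dir) (c : Γ × Head Q) : Head Q :=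
  match c.2 with
  | .run q =>
    match M q c.1 with
    | some (q', .move d') => if d = d' then .run q' else .none
    | _ => .none
  | .halted => .halted
  | _ => .none

/-- The next state of a cell that receives no head from its neighbours. -/
def isolatedUpdate (c : Γ × Head Q) : Γ × Head Q :=
  match c.2 with
  | .start => (c.1, .run default)
  | .run q =>
    match M q c.1 with
    | none => (c.1, .halted)
    | some (_, .move _) => (c.1, .none)
    | some (q', .write a) => (a, .run q')
  | _ => c

/-- The first head present among the two given ones. -/
def Head.or {Q : Type*} : Head Q → Head Q → Head Q
  | .none, h => h
  | h, _ => h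

/-- The local rule of the two-sided cellular automaton that simulates `M`. -/
def tmRule (l c r : Γ × Head Q) : Γ × Head Q :=
  ((isolatedUpdate M c).1,
    (emittedHead M .right l).or ((emittedHead M .left r).or (isolatedUpdate M c).2))

variable {M} in
theorem iterate_tmRule_snd_eq_halted {x : ℤ → Γ × Head Q}
    (hx : ∀ i, (x i).2 = .none ∨ (x i).2 = .halted) {p : ℤ} (hp : (x p).2 = .halted) {i : ℤ}
    {t : ℕ} (hi : |i - p| ≤ t) : ((localMap (tmRule M))^[t] x i).2 = .halted := by
  induction t generalizing x p with
  | zero =>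
    obtain rfl : i = p := by simpa [sub_eq_zero] using hi
    exact hp
  | succ t ih =>
    have hspread (j : ℤ) : (localMap (tmRule M) x j).2 =
        (x (j - 1)).2.or ((x (j + 1)).2.or (x j).2) := by
      rcases hx (j - 1) with hl | hl <;> rcases hx j with hc | hc <;>
        rcases hx (j + 1) with hr | hr <;>
        simp [localMap, tmRule, emittedHead, isolatedUpdate, hl, hc, hr]
    obtain ⟨p', hp', hip'⟩ : ∃ p', (p' = p ∨ p' = p - 1 ∨ p' = p + 1) ∧ |i - p'| ≤ t := by
      rcases lt_trichotomy i p with h | h | h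
      · exact ⟨p - 1, by simp, by grind⟩
      · exact ⟨p, by simp, by grind⟩
      · exact ⟨p + 1, by simp, by grind⟩
    refine ih (fun j => ?_) (p := p') ?_ hip'
    · grind [Head.or]
    · grind [Head.or]

variable [Inhabited Γ]

/-- The configuration with tape `T` and the head `h` at position `p`. -/
def encodeTape (p : ℤ) (h : Head Q) (T : Tape Γ) : ℤ → Γ × Head Q :=
  fun i => (T.nth (i - p), if i = p then h else .none)

variable {M}

theorem localMap_tmRule_start (p : ℤ) (T : Tape Γ) :
    localMap (tmRule M) (encodeTape p .start T) = encodeTape p (.run default) T := by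
  funext i
  by_cases hi : i = p <;> by_cases hl : i - 1 = p <;> by_cases hr : i + 1 = p <;>
    simp [localMap, tmRule, encodeTape, hi, hl, hr, emittedHead, isolatedUpdate, Head.or]

section Run

variable {p : ℤ} {q q' : Q} {T : Tape Γ}

theorem localMap_tmRule_of_eq_none (h : M q T.head = none) :
    localMap (tmRule M) (encodeTape p (.run q) T) = encodeTape p .halted T := by
  funext i
  by_cases hi : i = p <;> by_cases hl : i - 1 = p <;> by_cases hr : i + 1 = p <;>
    simp [localMap, tmRule, encodeTape, hi, hl, hr, emittedHead, isolatedUpdate, Head.or, h]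

theorem localMap_tmRule_of_eq_write {a : Γ} (h : M q T.head = some (q', .write a)) :
    localMap (tmRule M) (encodeTape p (.run q) T) = encodeTape p (.run q') (T.write a) := by
  funext i
  have hhead : (T.write a).head = a := rfl
  by_cases hi : i = p <;> by_cases hl : i - 1 = p <;> by_cases hr : i + 1 = p <;>
    simp [localMap, tmRule, encodeTape, hi, hl, hr, emittedHead, isolatedUpdate, Head.or, h,
      hhead, sub_eq_zero]

theorem localMap_tmRule_of_eq_move_left (h : M q T.head = some (q', .move .left)) :
    localMap (tmRule M) (encodeTape p (.run q) T) =
      encodeTape (p - 1) (.run q') (T.move .left) := by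
  funext i
  have hshift : i - (p - 1) - 1 = i - p := by ring
  by_cases hi : i = p <;> by_cases hl : i - 1 = p <;> by_cases hr : i + 1 = p <;>
    simp [localMap, tmRule, encodeTape, hi, hl, hr, emittedHead, isolatedUpdate, Head.or, h,
      hshift, eq_sub_iff_add_eq]

theorem localMap_tmRule_of_eq_move_right (h : M q T.head = some (q', .move .right)) :
    localMap (tmRule M) (encodeTape p (.run q) T) =
      encodeTape (p + 1) (.run q') (T.move .right) := by
  funext i
  have hshift : i - (p + 1) + 1 = i - p := by ring
  by_cases hi : i = p <;> by_cases hl : i - 1 = p <;> by_cases hr : i + 1 = p <;>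
    simp [localMap, tmRule, encodeTape, hi, hl, hr, emittedHead, isolatedUpdate, Head.or, h,
      hshift, ← sub_eq_iff_eq_add]

end Run

theorem exists_localMap_tmRule_of_mem_step (p : ℤ) {c c' : TM0.Cfg Γ Q}
    (h : c' ∈ TM0.step M c) :
    ∃ p', localMap (tmRule M) (encodeTape p (.run c.q) c.Tape) =
      encodeTape p' (.run c'.q) c'.Tape := by
  obtain ⟨⟨q', (_ | _) | a⟩, hM, rfl⟩ := Option.map_eq_some_iff.1 h
  · exact ⟨_, localMap_tmRule_of_eq_move_left hM⟩
  · exact ⟨_, localMap_tmRule_of_eq_move_right hM⟩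
  · exact ⟨_, localMap_tmRule_of_eq_write hM⟩

theorem exists_iterate_tmRule_of_reaches (p : ℤ) {c c' : TM0.Cfg Γ Q}
    (h : StateTransition.Reaches (TM0.step M) c c') :
    ∃ t p', (localMap (tmRule M))^[t] (encodeTape p (.run c.q) c.Tape) =
      encodeTape p' (.run c'.q) c'.Tape := by
  induction h with
  | refl => exact ⟨0, p, rfl⟩
  | tail _ hstep ih =>
    obtain ⟨t, p', ht⟩ := ih
    obtain ⟨p'', hp''⟩ := exists_localMap_tmRule_of_mem_step p' hstep
    exact ⟨t + 1, p'', by rw [iterate_succ_apply', ht, hp'']⟩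

theorem exists_iterate_tmRule_eq_encodeTape_run {c : TM0.Cfg Γ Q}
    (h : ¬(StateTransition.eval (TM0.step M) c).Dom) (p : ℤ) (t : ℕ) :
    ∃ p' c', StateTransition.Reaches (TM0.step M) c c' ∧
      (localMap (tmRule M))^[t] (encodeTape p (.run c.q) c.Tape) =
        encodeTape p' (.run c'.q) c'.Tape := by
  induction t with
  | zero => exact ⟨p, c, .refl, rfl⟩
  | succ t ih =>
    obtain ⟨p', c', hreach, ht⟩ := ih
    obtain ⟨c'', hc''⟩ : ∃ c'', TM0.step M c' = some c'' := by
      refine Option.ne_none_iff_exists'.1 fun hnone => h ?_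
      exact Part.dom_iff_mem.2 ⟨c', StateTransition.mem_eval.2 ⟨hreach, hnone⟩⟩
    obtain ⟨p'', hp''⟩ := exists_localMap_tmRule_of_mem_step p' hc''
    exact ⟨p'', c'', hreach.tail hc'', by rw [iterate_succ_apply', ht, hp'']⟩

theorem exists_iterate_tmRule_eq_halted_iff (l : List Γ) :
    (∃ t, ((localMap (tmRule M))^[t] (encodeTape 0 .start (Tape.mk₁ l)) 0).2 = .halted) ↔
      (TM0.eval M l).Dom := by
  change _ ↔ (StateTransition.eval (TM0.step M) (TM0.init l)).Dom
  have hstart (t : ℕ) : (localMap (tmRule M))^[t + 1] (encodeTape 0 .start (Tape.mk₁ l)) =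
      (localMap (tmRule M))^[t] (encodeTape 0 (.run (TM0.init (Λ := Q) l).q)
        (TM0.init (Λ := Q) l).Tape) := by
    rw [iterate_succ_apply, localMap_tmRule_start]
    rfl
  constructor
  · rintro ⟨t, ht⟩
    by_contra hdom
    cases t with
    | zero => simp [encodeTape] at ht
    | succ t =>
      obtain ⟨p', c', -, hrun⟩ := exists_iterate_tmRule_eq_encodeTape_run hdom 0 t
      rw [hstart, hrun] at ht
      simp only [encodeTape] at ht
      grind
  · intro hdom
    obtain ⟨c', hc'⟩ := Part.dom_iff_mem.1 hdom
    obtain ⟨hreach, hnone⟩ := StateTransition.mem_eval.1 hc'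
    obtain ⟨t, p', ht⟩ := exists_iterate_tmRule_of_reaches 0 hreach
    have hhalt := localMap_tmRule_of_eq_none (p := p') (Option.map_eq_none_iff.1 hnone)
    refine ⟨p'.natAbs + 1 + t + 1, ?_⟩
    rw [hstart, iterate_add_apply, ht, iterate_succ_apply, hhalt]
    refine iterate_tmRule_snd_eq_halted (p := p') (fun i => ?_) ?_ (by simp)
    · simp only [encodeTape]
      grind
    · simp [encodeTape]

/-- The row machine that simulates `M` on the tape obtained by folding the tape of `M` at the
origin, the first cell of which carries `marker`. -/
def tmRowMachine (M : TM0.Machine Γ Q) (marker : Γ) (digit : Bool → Γ) :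
    RowMachine ((Γ × Head Q) × (Γ × Head Q)) where
  rule := foldRule (tmRule M)
  rule₀ := foldRule₀ (tmRule M)
  boot := ((marker, .start), (default, .none))
  sym o := ((o.elim default digit, .none), (default, .none))
  accepting w := w.1.2 matches .halted
  rule_sym _ _ _ := rfl
  rule_boot _ _ := rfl

theorem nth_mk₁_natCast (l : List Γ) (j : ℕ) : (Tape.mk₁ l).nth j = l[j]?.getD default := by
  rw [Tape.mk₁, Tape.mk₂, Tape.mk'_nth_nat, ListBlank.nth_mk, ← List.getD_default_eq_getI,
    List.getD_eq_getElem?_getD]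

theorem nth_mk₁_neg (l : List Γ) (j : ℕ) : (Tape.mk₁ l).nth (-1 - j) = default := by
  have hj : (-1 - j : ℤ) = Int.negSucc j := by omega
  rw [hj]
  change ListBlank.nth (ListBlank.mk []) j = default
  rw [ListBlank.nth_mk, List.getI_nil]

theorem fold_encodeTape_mk₁ (marker : Γ) (digit : Bool → Γ) (u : List Bool) :
    fold (encodeTape 0 .start (Tape.mk₁ (marker :: u.map digit))) =
      (tmRowMachine M marker digit).initialRow (u[·]?) := by
  funext j
  have hneg : -1 - (j : ℤ) ≠ 0 := by omega
  simp only [fold, encodeTape, sub_zero, nth_mk₁_natCast, nth_mk₁_neg, hneg, ↓reduceIte]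
  cases j with
  | zero => simp [RowMachine.initialRow, tmRowMachine]
  | succ j =>
    have hj : (j : ℤ) + 1 ≠ 0 := by omega
    cases h : u[j]? <;> simp [RowMachine.initialRow, tmRowMachine, h, hj]

theorem accepts_tmRowMachine_iff (marker : Γ) (digit : Bool → Γ) (u : List Bool) :
    (tmRowMachine M marker digit).Accepts u ↔ (TM0.eval M (marker :: u.map digit)).Dom := by
  have hfold (t : ℕ) := ((semiconj_fold (tmRule M)).iterate_right t).eq
    (encodeTape 0 .start (Tape.mk₁ (marker :: u.map digit)))
  have haccepting (x : ℤ → Γ × Head Q) :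
      (tmRowMachine M marker digit).accepting (fold x 0) ↔ (x 0).2 = .halted := by
    rcases h : (x 0).2 <;> simp [tmRowMachine, fold, h]
  rw [← exists_iterate_tmRule_eq_halted_iff, RowMachine.Accepts]
  refine exists_congr fun t => ?_
  rw [← haccepting, hfold, ← fold_encodeTape_mk₁]
  rfl

end Simulation

theorem exists_rowMachine_of_rePred {L : ℕ → Prop} (hL : REPred L) :
    ∃ (W : Type) (_ : Finite W) (D : RowMachine W),
      ∀ u, D.Accepts (true :: u) ↔ L (binaryValue (true :: u)) := by
  obtain ⟨Γ, Q, _, _, _, _, M, marker, digit, hM⟩ := exists_finite_tm0_of_rePred hL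
  have := Fintype.ofFinite Q
  exact ⟨_, inferInstance, tmRowMachine M marker digit, fun u =>
    (accepts_tmRowMachine_iff marker digit _).trans (hM u)⟩

/- The coercion in the body of `word` elaborates to a monadic map of lists, which this lemma
removes. -/
theorem word_eq_map (x : ℤ → A) (i : ℤ) (n : ℕ) :
    word x i n = (List.range n).map fun k : ℕ => x (i + (k : ℤ)) := by
  have hcast (l : List ℕ) : (do let a ← l; pure (a : ℤ)) = l.map fun k : ℕ => (k : ℤ) := by
    induction l <;> simp_all
  rw [word, hcast, List.map_map]
  rfl

theorem word_eq_iff (x : ℤ → A) (i : ℤ) (s : List A) :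
    word x i s.length = s ↔ ∀ j : Fin s.length, x (i + (j : ℕ)) = s[j] := by
  rw [word_eq_map, List.ext_get_iff]
  simp [Fin.forall_iff]

theorem word_comp {B : Type*} (g : A → B) (x : ℤ → A) (i : ℤ) (n : ℕ) :
    word (g ∘ x) i n = (word x i n).map g := by
  simp only [word_eq_map, List.map_map]
  rfl

section Topology

variable {B C : Type*} [TopologicalSpace B] [TopologicalSpace C]

theorem isCA_localMap [DiscreteTopology B] (ρ : B → B → B → B) : IsCA (localMap ρ) := by
  have hρ : Continuous fun p : B × B × B => ρ p.1 p.2.1 p.2.2 := continuous_of_discreteTopology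
  refine ⟨continuous_pi fun i => hρ.comp (f := fun x : ℤ → B => (x (i - 1), x i, x (i + 1)))
    (by fun_prop), ?_⟩
  funext x i
  simp only [comp_apply, shift, localMap, sub_add_cancel, add_sub_cancel_right]

theorem isClopen_cylinder_s5 [DiscreteTopology B] (s : List B) (i : ℤ) :
    IsClopen (cylinder s i) := by
  have hset : cylinder s i = ⋂ j : Fin s.length, (fun x => x (i + (j : ℕ))) ⁻¹' {s[j]} := by
    ext x
    simp [cylinder, word_eq_iff]
  rw [hset]
  exact isClopen_iInter_of_finite fun j =>
    (isClopen_discrete _).preimage (continuous_apply _)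

theorem apply_mem_genLimitSet {f : (ℤ → B) → ℤ → B} {g : (ℤ → C) → ℤ → C}
    {h : (ℤ → B) → ℤ → C} (hcont : Continuous h) (hopen : IsOpenMap h) (hfg : Semiconj h f g)
    {y : ℤ → B} (hy : y ∈ genLimitSet f) : h y ∈ genLimitSet g := by
  rintro K ⟨hK, hres⟩
  refine hy (h ⁻¹' K) ⟨hK.preimage hcont, ?_⟩
  refine mem_of_superset (tendsto_residual_of_isOpenMap hcont hopen hres) fun x hx z hz => hx ?_
  have hcomm : (fun t => g^[t] (h x)) = h ∘ fun t => f^[t] x :=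
    funext fun t => ((hfg.iterate_right t).eq x).symm
  rw [omegaSet, mem_ofPred_eq, hcomm]
  exact hz.continuousAt_comp hcont.continuousAt

theorem exists_fin_isCA_of_localMap [DiscreteTopology B] [Finite B] (ρ : B → B → B → B) :
    ∃ (m : ℕ) (e : B ≃ Fin m) (f : (ℤ → Fin m) → ℤ → Fin m), IsCA f ∧
      ∀ s : List B, s.map e ∈ lang (genLimitSet f) ↔ s ∈ lang (genLimitSet (localMap ρ)) := by
  obtain ⟨m, ⟨e⟩⟩ := Finite.exists_equiv_fin B
  let ρ' (l c r : Fin m) : Fin m := e (ρ (e.symm l) (e.symm c) (e.symm r))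
  let h : (ℤ → B) ≃ₜ (ℤ → Fin m) := Homeomorph.piCongrRight fun _ => e.toHomeomorphOfDiscrete
  have hsemi : Semiconj h (localMap ρ) (localMap ρ') := fun x => by
    funext i
    change e (ρ (x (i - 1)) (x i) (x (i + 1))) =
      e (ρ (e.symm (e (x (i - 1)))) (e.symm (e (x i))) (e.symm (e (x (i + 1)))))
    simp only [Equiv.symm_apply_apply]
  have hsemi' : Semiconj h.symm (localMap ρ') (localMap ρ) :=
    hsemi.inverse_left h.symm_apply_apply h.apply_symm_apply
  refine ⟨m, e, localMap ρ', isCA_localMap ρ', fun s => ⟨?_, ?_⟩⟩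
  · rintro ⟨y, hy, i, hi⟩
    refine ⟨h.symm y, apply_mem_genLimitSet h.symm.continuous h.symm.isOpenMap hsemi' hy, i, ?_⟩
    apply e.injective.list_map
    rw [← word_comp, ← hi, List.length_map]
    congr 1
    exact h.apply_symm_apply y
  · rintro ⟨y, hy, i, hi⟩
    refine ⟨h y, apply_mem_genLimitSet h.continuous h.isOpenMap hsemi hy, i, ?_⟩
    rw [List.length_map, ← congrArg (List.map e) hi, ← word_comp]
    rfl

theorem notMem_lang_genLimitSet [DiscreteTopology B] {f : (ℤ → B) → ℤ → B} {s : List B}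
    {G : Set (ℤ → B)} (hG : G ∈ residual (ℤ → B))
    (h : ∀ x ∈ G, ∀ i, ∀ᶠ t in atTop, f^[t] x ∉ cylinder s i) : s ∉ lang (genLimitSet f) := by
  rintro ⟨y, hy, i, hi⟩
  refine hy (cylinder s i)ᶜ ⟨(isClopen_cylinder_s5 s i).compl.isClosed, ?_⟩ hi
  refine mem_of_superset hG fun x hx z hz hzs => ?_
  have hfreq := mapClusterPt_iff_frequently.1 hz _ ((isClopen_cylinder_s5 s i).isOpen.mem_nhds hzs)
  exact hfreq (h x hx i)

theorem inter_genLimitSet_nonempty [CompactSpace (ℤ → B)] {f : (ℤ → B) → ℤ → B}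
    {K : Set (ℤ → B)} (hK : IsClosed K)
    (h : ∀ G ∈ residual (ℤ → B), ∃ x ∈ G, ∃ᶠ t in atTop, f^[t] x ∈ K) :
    (K ∩ genLimitSet f).Nonempty := by
  rw [genLimitSet, sInter_eq_iInter]
  refine hK.isCompact.inter_iInter_nonempty _ (fun C => C.2.1) fun u => ?_
  have hrealm : (⋂ C ∈ u, realm f C.1) ∈ residual (ℤ → B) :=
    (biInter_finset_mem u).2 fun C _ => C.2.2
  obtain ⟨x, hx, hfreq⟩ := h _ hrealm
  obtain ⟨y, hyK, hy⟩ := hK.isCompact.exists_mapClusterPt_of_frequently hfreq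
  exact ⟨y, hyK, mem_iInter₂.2 fun C hC => mem_iInter₂.1 hx C hC hy⟩

theorem exists_mem_residual_frequently_iterate_mem {X : Type*} [TopologicalSpace X]
    [BaireSpace X] {f : X → X} (hf : Continuous f) {K U : Set X} (hK : IsOpen K) (hU : IsOpen U)
    (hne : U.Nonempty) (hUK : ∀ N, U ⊆ closure {x | ∃ t ≥ N, f^[t] x ∈ K}) {G : Set X}
    (hG : G ∈ residual X) : ∃ x ∈ G, ∃ᶠ t in atTop, f^[t] x ∈ K := by
  have hopen (N : ℕ) : IsOpen {x | ∃ t ≥ N, f^[t] x ∈ K} := by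
    have hset : {x | ∃ t ≥ N, f^[t] x ∈ K} = ⋃ t ≥ N, f^[t] ⁻¹' K := by
      ext x
      simp
    rw [hset]
    exact isOpen_biUnion fun t _ => hK.preimage (hf.iterate t)
  have hres (N : ℕ) : {x | ∃ t ≥ N, f^[t] x ∈ K} ∪ (closure U)ᶜ ∈ residual X := by
    refine residual_of_dense_open ((hopen N).union isClosed_closure.isOpen_compl) fun x => ?_
    rw [closure_union]
    by_cases hx : x ∈ closure U
    · exact .inl (closure_minimal (hUK N) isClosed_closure hx)
    · exact .inr (subset_closure hx)
  have hdense := dense_of_mem_residual (inter_mem hG (countable_iInter_mem.2 hres))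
  obtain ⟨x, hxU, hxG, hx⟩ := hdense.inter_open_nonempty U hU hne
  refine ⟨x, hxG, frequently_atTop.2 fun N => ?_⟩
  exact (mem_iInter.1 hx N).resolve_right fun hxc => hxc (subset_closure hxU)

theorem mem_lang_genLimitSet [DiscreteTopology B] [Finite B] {f : (ℤ → B) → ℤ → B}
    (hf : Continuous f) {s : List B} {i : ℤ} {U : Set (ℤ → B)} (hU : IsOpen U)
    (hne : U.Nonempty) (h : ∀ x ∈ U, ∀ M N : ℕ, ∃ y : ℤ → B, (∀ i, i.natAbs ≤ M → y i = x i) ∧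
      ∃ t ≥ N, f^[t] y ∈ cylinder s i) : s ∈ lang (genLimitSet f) := by
  have hdense (N : ℕ) : U ⊆ closure {x | ∃ t ≥ N, f^[t] x ∈ cylinder s i} := by
    intro x hx
    refine mem_closure_iff.2 fun V hV hxV => ?_
    obtain ⟨I, u, hu, hIV⟩ := isOpen_pi_iff.1 hV x hxV
    obtain ⟨y, hyx, hy⟩ := h x hx (I.sup Int.natAbs) N
    refine ⟨y, hIV fun j hj => ?_, hy⟩
    rw [hyx j (Finset.le_sup (f := Int.natAbs) hj)]
    exact (hu j hj).2
  have hs := isClopen_cylinder_s5 s i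
  obtain ⟨y, hys, hy⟩ := inter_genLimitSet_nonempty hs.isClosed fun G hG =>
    exists_mem_residual_frequently_iterate_mem hf hs.isOpen hU hne hdense hG
  exact ⟨y, hy, i, hys⟩

theorem setOf_exists_apply_mem_residual {S : Set B} (hS : IsOpen S) (hne : S.Nonempty) {I : Set ℤ}
    (hI : I.Infinite) : {x : ℤ → B | ∃ i ∈ I, x i ∈ S} ∈ residual (ℤ → B) := by
  apply residual_of_dense_open
  · have hset : {x : ℤ → B | ∃ i ∈ I, x i ∈ S} = ⋃ i ∈ I, (fun x => x i) ⁻¹' S := by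
      ext x
      simp
    rw [hset]
    exact isOpen_biUnion fun i _ => hS.preimage (continuous_apply i)
  · refine dense_iff_inter_open.2 fun V hV ⟨x, hx⟩ => ?_
    obtain ⟨b, hb⟩ := hne
    obtain ⟨F, u, hu, hF⟩ := isOpen_pi_iff.1 hV x hx
    obtain ⟨i, hi, hiF⟩ := hI.exists_notMem_finset F
    refine ⟨update x i b, hF fun j hj => ?_, i, hi, by simpa using hb⟩
    rw [update_of_ne (ne_of_mem_of_not_mem hj hiF)]
    exact (hu j hj).2

end Topology

/-- The phases of a verifier: waiting for a `launch` signal, simulating the row machine, having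
seen it accept, or discarded. -/
inductive Phase
  | armed
  | running
  | accepted
  | spent
  deriving DecidableEq

instance : Fintype Phase := ⟨{.armed, .running, .accepted, .spent}, by rintro ⟨⟩ <;> decide⟩

/-- The permanent content of a cell: an input bit, a cell that will turn into the bit `false` when
the first `load` signal arrives, or a verifier of the input to its right. -/
inductive Tile
  | bit (b : Bool)
  | fresh
  | verifier (p : Phase)
  deriving DecidableEq, Fintype

/-- The signals, which travel to the right at speed one. A `launch` starts the first armed verifier
that it meets and goes on as a `load`, which writes the input of that verifier on the work tape up
to the first fresh cell and goes on as a `clear`, which blanks the work tape. The last two also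
rearm the verifiers that they meet. -/
inductive Signal
  | none
  | launch
  | load
  | clear
  deriving DecidableEq

instance : Fintype Signal := ⟨{.none, .launch, .load, .clear}, by rintro ⟨⟩ <;> decide⟩

/-- The rank of a signal in the order in which a signal can be converted. -/
def Signal.rank : Signal → ℕ
  | .none => 0
  | .launch => 1
  | .load => 2
  | .clear => 3

/-- The signals, ordered by rank: a signal can only be converted into a larger one. -/
instance : LinearOrder Signal :=
  LinearOrder.lift' Signal.rank (by rintro ⟨⟩ ⟨⟩ <;> simp [Signal.rank])

/-- The cells of the verifying automaton. The component `work` is the state of a cell of the row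
machine. -/
@[ext]
structure Cell (W : Type*) where
  tile : Tile
  signal : Signal
  work : W

instance {W : Type*} [Finite W] : Finite (Cell W) :=
  Finite.of_injective (fun c => (c.tile, c.signal, c.work)) fun _ _ h => by
    simp only [Prod.mk.injEq] at h
    exact Cell.ext h.1 h.2.1 h.2.2

theorem Signal.none_lt_iff {s : Signal} : .none < s ↔ s ≠ .none := by
  revert s
  decide

theorem Signal.load_le_iff {s : Signal} : .load ≤ s ↔ s = .load ∨ s = .clear := by
  revert s
  decide

namespace Tile

/-- The bit that a `load` signal reads off a tile. Verifiers and fresh cells read as `false`. -/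
def readBit : Tile → Bool
  | bit b => b
  | _ => false

/-- Being a verifier, in any phase. -/
def IsVerifier (τ : Tile) : Prop := ∃ p, τ = verifier p

/-- Being a verifier that is simulating the row machine or has seen it accept. -/
def IsActive (τ : Tile) : Prop := τ = verifier .running ∨ τ = verifier .accepted

end Tile

namespace RowMachine

variable {W : Type*} (D : RowMachine W)

/-- The state of an empty work tape. -/
def blank : W := D.sym none

/-- The cell is a verifier whose simulation is accepting. -/
def IsAccepting (c : Cell W) : Prop := c.tile = .verifier .running ∧ D.accepting c.work

instance (c : Cell W) : Decidable (D.IsAccepting c) :=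
  inferInstanceAs (Decidable (_ ∧ _))

/-- The signal sent by a cell to its right neighbour. A verifier that accepts sends a `clear`. -/
def emit (c : Cell W) : Signal :=
  if c.signal = .none ∧ D.IsAccepting c then .clear else c.signal

/-- The signal of a cell with tile `τ` that receives the signal `s`. -/
def nextSignal (s : Signal) (τ : Tile) : Signal :=
  match s, τ with
  | .launch, .verifier .armed => .load
  | .load, .fresh => .clear
  | s, _ => s

/-- The next tile of the cell `c` if it receives the signal `s`. -/
def nextTile (s : Signal) (c : Cell W) : Tile :=
  match s, c.tile with
  | .none, τ => if c.signal = .none ∧ D.IsAccepting c then .verifier .accepted else τ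
  | .launch, .verifier .armed => .verifier .running
  | .launch, .verifier _ => .verifier .spent
  | .load, .fresh => .bit false
  | .load, .verifier _ => .verifier .armed
  | .clear, .verifier _ => .verifier .armed
  | _, τ => τ

/-- The next work state of the cell `c` with neighbours `l` and `r` if it receives the signal `s`.
A cell rests for one step after a signal has passed, so that its right neighbour is ready. -/
def nextWork (s : Signal) (l c r : Cell W) : W :=
  match s, c.tile with
  | .none, τ =>
    if c.signal ≠ .none then c.work else
      match τ with
      | .verifier .running => if D.accepting c.work then D.blank else D.rule₀ c.work r.work
      | .verifier .accepted => D.blank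
      | _ => D.rule l.work c.work r.work
  | .launch, .verifier .armed => D.boot
  | .launch, _ => D.blank
  | .load, .fresh => D.blank
  | .load, τ => D.sym (some τ.readBit)
  | .clear, _ => D.blank

/-- The local rule of the verifying automaton. -/
def cellRule (l c r : Cell W) : Cell W where
  tile := D.nextTile (D.emit l) c
  signal := nextSignal (D.emit l) c.tile
  work := D.nextWork (D.emit l) l c r

section LocalRule

variable {D} {l c r : Cell W} {s : Signal}

theorem signal_le_emit : c.signal ≤ D.emit c := by
  unfold emit
  split_ifs with h
  · rw [h.1]
    decide
  · exact le_rfl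

theorem emit_eq_signal (h : c.signal ≠ .none ∨ D.emit c ≠ .clear) : D.emit c = c.signal := by
  unfold emit at *
  split_ifs at * with hc
  · simp [hc.1] at h
  · rfl

theorem emit_of_tile_eq_bit {b : Bool} (h : c.tile = .bit b) : D.emit c = c.signal :=
  if_neg fun hc => Tile.noConfusion (h.symm.trans hc.2.1)

theorem emit_eq_none_iff : D.emit c = .none ↔ c.signal = .none ∧ ¬D.IsAccepting c := by
  unfold emit
  split_ifs with h
  · simp [h.2]
  · tauto

theorem not_isAccepting (h : ¬c.tile.IsActive) : ¬D.IsAccepting c := fun hc => h (.inl hc.1)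

theorem le_nextSignal (s : Signal) (τ : Tile) : s ≤ nextSignal s τ := by
  revert s τ
  decide

theorem nextSignal_eq_none_iff {τ : Tile} : nextSignal s τ = .none ↔ s = .none := by
  revert s τ
  decide

theorem nextSignal_load_of_ne_fresh {τ : Tile} (h : τ ≠ .fresh) : nextSignal .load τ = .load := by
  revert τ
  decide

theorem nextSignal_launch_of_ne_armed {τ : Tile} (h : τ ≠ .verifier .armed) :
    nextSignal .launch τ = .launch := by
  revert τ
  decide

theorem nextTile_launch_ne_armed : D.nextTile .launch c ≠ .verifier .armed := by
  rcases h : c.tile with _ | _ | ⟨⟨⟩⟩ <;> simp [nextTile, h]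

theorem nextTile_of_tile_eq_bit {b : Bool} (h : c.tile = .bit b) : D.nextTile s c = .bit b := by
  cases s <;> simp [nextTile, h, IsAccepting]

theorem nextTile_isVerifier (h : c.tile.IsVerifier) : (D.nextTile s c).IsVerifier := by
  obtain ⟨p, hp⟩ := h
  cases s <;> cases p <;> simp only [nextTile, hp] <;> try split_ifs
  all_goals exact ⟨_, rfl⟩

theorem nextTile_ne_fresh (h : c.tile ≠ .fresh) : D.nextTile s c ≠ .fresh := by
  cases s <;> rcases hc : c.tile with _ | _ | ⟨⟨⟩⟩ <;> simp_all [nextTile] <;> split_ifs <;> simp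

theorem readBit_nextTile : (D.nextTile s c).readBit = c.tile.readBit := by
  cases s <;> rcases hc : c.tile with _ | _ | ⟨⟨⟩⟩ <;>
    simp [nextTile, hc, IsAccepting, Tile.readBit]
  split_ifs <;> rfl

theorem nextTile_of_le_of_isVerifier (hs : .load ≤ s) (h : c.tile.IsVerifier) :
    D.nextTile s c = .verifier .armed := by
  obtain ⟨p, hp⟩ := h
  rcases Signal.load_le_iff.1 hs with rfl | rfl <;> simp [nextTile, hp]

theorem not_isActive_nextTile_of_le (hs : .load ≤ s) : ¬(D.nextTile s c).IsActive := by
  rcases Signal.load_le_iff.1 hs with rfl | rfl <;> rcases hc : c.tile with _ | _ | _ <;>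
    simp [nextTile, Tile.IsActive, hc]

theorem not_isActive_nextTile_of_nextSignal_eq_launch (h : nextSignal s c.tile = .launch) :
    ¬(D.nextTile s c).IsActive := by
  cases s <;> rcases hc : c.tile with _ | _ | ⟨⟨⟩⟩ <;>
    simp_all [nextSignal, nextTile, Tile.IsActive]

theorem nextWork_load_of_ne_fresh (h : c.tile ≠ .fresh) :
    D.nextWork .load l c r = D.sym (some c.tile.readBit) := by
  rcases hc : c.tile with _ | _ | _ <;> simp_all [nextWork]

theorem cellRule_of_not_isActive (hl : D.emit l = .none) (hc : ¬c.tile.IsActive) :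
    D.cellRule l c r =
      ⟨c.tile, .none, if c.signal = .none then D.rule l.work c.work r.work else c.work⟩ := by
  rcases h : c.tile with _ | _ | ⟨⟨⟩⟩ <;>
    simp_all [cellRule, nextTile, nextSignal, nextWork, Tile.IsActive, IsAccepting]

theorem cellRule_launch (hl : D.emit l = .launch) (hc : c.tile = .verifier .armed) :
    D.cellRule l c r = ⟨.verifier .running, .load, D.boot⟩ := by
  simp [cellRule, hl, hc, nextTile, nextSignal, nextWork]

theorem cellRule_boot (hl : D.emit l = .none) :
    D.cellRule l ⟨.verifier .running, .load, D.boot⟩ r = ⟨.verifier .running, .none, D.boot⟩ := by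
  simp [cellRule, hl, nextTile, nextSignal, nextWork]

theorem cellRule_running (hl : D.emit l = .none) {w : W} (hw : ¬D.accepting w) :
    D.cellRule l ⟨.verifier .running, .none, w⟩ r =
      ⟨.verifier .running, .none, D.rule₀ w r.work⟩ := by
  simp [cellRule, hl, hw, nextTile, nextSignal, nextWork, IsAccepting]

theorem cellRule_of_isAccepting (hl : D.emit l = .none) (hs : c.signal = .none)
    (hc : D.IsAccepting c) : D.cellRule l c r = ⟨.verifier .accepted, .none, D.blank⟩ := by
  simp [cellRule, hl, hs, hc, hc.1, hc.2, nextTile, nextSignal, nextWork]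

theorem cellRule_accepted (hl : D.emit l = .none) :
    D.cellRule l ⟨.verifier .accepted, .none, D.blank⟩ r =
      ⟨.verifier .accepted, .none, D.blank⟩ := by
  simp [cellRule, hl, nextTile, nextSignal, nextWork, IsAccepting]

end LocalRule

end RowMachine

section SpaceTime

variable {B : Type*} {ρ : B → B → B → B} {X Y : ℕ → ℤ → B}

/-- The space-time diagrams of the orbits of the cellular automaton with local rule `ρ`. -/
def IsSpaceTime (ρ : B → B → B → B) (X : ℕ → ℤ → B) : Prop := ∀ t, X (t + 1) = localMap ρ (X t)

theorem isSpaceTime_iterate (ρ : B → B → B → B) (x : ℤ → B) :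
    IsSpaceTime ρ fun t => (localMap ρ)^[t] x :=
  fun t => iterate_succ_apply' _ t x

namespace IsSpaceTime

theorem apply_succ (hX : IsSpaceTime ρ X) (t : ℕ) (i : ℤ) :
    X (t + 1) i = ρ (X t (i - 1)) (X t i) (X t (i + 1)) := by
  rw [hX t, localMap]

theorem apply_succ_add_one (hX : IsSpaceTime ρ X) (t : ℕ) (i : ℤ) :
    X (t + 1) (i + 1) = ρ (X t i) (X t (i + 1)) (X t (i + 2)) := by
  rw [hX.apply_succ, add_sub_cancel_right, add_assoc, one_add_one_eq_two]

theorem apply_succ_zero (hX : IsSpaceTime ρ X) (t : ℕ) :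
    X (t + 1) 0 = ρ (X t (-1)) (X t 0) (X t 1) := by
  simpa using hX.apply_succ t 0

theorem translate (hX : IsSpaceTime ρ X) (τ : ℕ) (p : ℤ) :
    IsSpaceTime ρ fun t i => X (τ + t) (p + i) := by
  intro t
  funext i
  simp only [localMap, ← add_assoc, hX.apply_succ, add_sub_assoc]

theorem congr_of_le (hX : IsSpaceTime ρ X) (hY : IsSpaceTime ρ Y) {a : ℤ}
    (h : ∀ i, a ≤ i → X 0 i = Y 0 i) : ∀ (t : ℕ) (i : ℤ), a + t ≤ i → X t i = Y t i
  | 0, i, hi => h i (by omega)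
  | t + 1, i, hi => by
    have ih := congr_of_le hX hY h t
    rw [hX.apply_succ, hY.apply_succ, ih _ (by omega), ih _ (by omega), ih _ (by omega)]

end IsSpaceTime

end SpaceTime

section Truncate

variable {F : ℕ → Prop} {b : ℕ → Bool}

open Classical in
/-- The tape contents `b`, ended at the first position that satisfies `F`, if any. -/
noncomputable def truncate (F : ℕ → Prop) (b : ℕ → Bool) (j : ℕ) : Option Bool :=
  if ∃ i ≤ j, F i then none else some (b j)

theorem truncate_of_exists {j : ℕ} (h : ∃ i ≤ j, F i) : truncate F b j = none := if_pos h

theorem truncate_of_forall {j : ℕ} (h : ∀ i ≤ j, ¬F i) : truncate F b j = some (b j) :=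
  if_neg <| by simpa using h

theorem truncate_eq_getElem? {E : ℕ} (hE : F E) (hF : ∀ i < E, ¬F i) :
    truncate F b = (((List.range E).map b)[·]?) := by
  funext j
  rcases lt_or_ge j E with hj | hj
  · simp [truncate_of_forall fun i hi => hF i (hi.trans_lt hj), hj]
  · simp [truncate_of_exists ⟨E, hj, hE⟩, hj]

end Truncate

namespace RowMachine

variable {W : Type*} {D : RowMachine W}

theorem step_iterate_initialRow_of_le {s : ℕ → Option Bool} {t j : ℕ} (h : t ≤ j) :
    D.step^[t] (D.initialRow s) j = D.initialRow s j := by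
  induction t generalizing j with
  | zero => rfl
  | succ t ih =>
    obtain ⟨j, rfl⟩ : ∃ k, j = k + 1 := ⟨j - 1, by omega⟩
    rw [iterate_succ_apply']
    simp only [step, halfLineMap]
    rw [← step, ih (by omega), ih (by omega), ih (by omega)]
    cases j <;> simp only [initialRow, D.rule_boot, D.rule_sym]

section SpaceTime

variable {X : ℕ → ℤ → Cell W}

theorem tile_induction (hX : IsSpaceTime D.cellRule X) {p : Tile → Prop}
    (hp : ∀ s c, p c.tile → p (D.nextTile s c)) {s t : ℕ} (hst : s ≤ t) {i : ℤ}
    (h : p (X s i).tile) : p (X t i).tile := by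
  induction t, hst using Nat.le_induction with
  | base => exact h
  | succ t _ ih =>
    rw [hX.apply_succ]
    exact hp _ _ ih

theorem readBit_tile (hX : IsSpaceTime D.cellRule X) (t : ℕ) (i : ℤ) :
    (X t i).tile.readBit = (X 0 i).tile.readBit :=
  tile_induction hX (p := fun τ => τ.readBit = (X 0 i).tile.readBit)
    (fun _ _ h => readBit_nextTile.trans h) t.zero_le rfl

theorem emit_le_signal_succ (hX : IsSpaceTime D.cellRule X) (t : ℕ) (i : ℤ) :
    D.emit (X t i) ≤ (X (t + 1) (i + 1)).signal := by
  rw [hX.apply_succ_add_one]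
  exact le_nextSignal _ _

theorem monotone_emit (hX : IsSpaceTime D.cellRule X) (t : ℕ) (i : ℤ) :
    Monotone fun s : ℕ => D.emit (X (t + s) (i + s)) :=
  monotone_nat_of_le_succ fun s => by
    rw [Nat.cast_succ, ← add_assoc, ← add_assoc]
    exact (emit_le_signal_succ hX _ _).trans signal_le_emit

/-- Only a `clear` can come out of nothing. -/
theorem signal_mem_Ioo_of_add (hX : IsSpaceTime D.cellRule X) {t : ℕ} {i : ℤ} {s : ℕ}
    (h : (X (t + s) (i + s)).signal ∈ Ioo .none .clear) :
    (X t i).signal ∈ Ioo .none .clear := by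
  induction s with
  | zero => simpa using h
  | succ s ih =>
    apply ih
    rw [Nat.cast_succ, ← add_assoc, ← add_assoc, hX.apply_succ, add_sub_cancel_right] at h
    have hlt : D.emit (X (t + s) (i + s)) < .clear := (le_nextSignal _ _).trans_lt h.2
    have hne : D.emit (X (t + s) (i + s)) ≠ .none := fun he =>
      h.1.ne' (nextSignal_eq_none_iff.2 he)
    rw [← emit_eq_signal (.inr hlt.ne)]
    exact ⟨Signal.none_lt_iff.2 hne, hlt⟩

theorem quiet_behind_front (hX : IsSpaceTime D.cellRule X) {n : ℕ}
    (hfront : ∀ j : ℕ, 1 ≤ j → j ≤ n → ¬(X j j).tile.IsActive) {t : ℕ}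
    (hq : ∀ s, 1 ≤ s → s < t → D.emit (X s 0) = .none) {j : ℕ} (hj : 1 ≤ j) (hjn : j ≤ n)
    (hjt : j ≤ t) : ¬(X t j).tile.IsActive ∧ (j < t → (X t j).signal = .none) := by
  induction t generalizing j with
  | zero => omega
  | succ t ih =>
    rcases hjt.eq_or_lt with rfl | hjt'
    · exact ⟨hfront _ hj hjn, fun h => absurd h (lt_irrefl _)⟩
    obtain ⟨j, rfl⟩ : ∃ k, j = k + 1 := ⟨j - 1, by omega⟩
    replace ih {k : ℕ} := ih (fun s h₁ h₂ => hq s h₁ (by omega)) (j := k)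
    have hemit : D.emit (X t j) = .none := by
      rcases j.eq_zero_or_pos with rfl | hj₀
      · exact hq t (by omega) (by omega)
      · obtain ⟨h₁, h₂⟩ := ih hj₀ (by omega) (by omega)
        exact emit_eq_none_iff.2 ⟨h₂ (by omega), not_isAccepting h₁⟩
    have hinactive := (ih hj hjn (by omega)).1
    rw [Nat.cast_succ] at hinactive ⊢
    rw [hX.apply_succ_add_one, cellRule_of_not_isActive hemit hinactive]
    exact ⟨hinactive, fun _ => rfl⟩

theorem quiet_behind_signal (hX : IsSpaceTime D.cellRule X) (h₀ : .load ≤ D.emit (X 0 0)) {t : ℕ}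
    (hq : ∀ s, 1 ≤ s → s < t → D.emit (X s 0) = .none) {j : ℕ} (hj : 1 ≤ j) (hjt : j ≤ t) :
    ¬(X t j).tile.IsActive ∧ (j < t → (X t j).signal = .none) := by
  refine quiet_behind_front hX (fun k hk _ => ?_) hq hj le_rfl hjt
  obtain ⟨k, rfl⟩ : ∃ l, k = l + 1 := ⟨k - 1, by omega⟩
  rw [Nat.cast_succ, hX.apply_succ_add_one]
  refine not_isActive_nextTile_of_le (h₀.trans ?_)
  simpa using monotone_emit hX 0 0 k.zero_le

theorem work_succ_of_quiet (hX : IsSpaceTime D.cellRule X) (h₀ : .load ≤ D.emit (X 0 0)) {t : ℕ}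
    (hq : ∀ s, 1 ≤ s → s ≤ t → D.emit (X s 0) = .none) {j : ℕ} (hjt : j + 1 ≤ t) :
    (X (t + 1) (j + 1)).work =
      if j + 1 < t then D.rule (X t j).work (X t (j + 1)).work (X t (j + 2)).work
      else (X t (j + 1)).work := by
  have hquiet {k : ℕ} := quiet_behind_signal hX h₀ (t := t) (fun s h₁ h₂ => hq s h₁ h₂.le) (j := k)
  have hemit : D.emit (X t j) = .none := by
    rcases j.eq_zero_or_pos with rfl | hj
    · exact hq t hjt le_rfl
    · obtain ⟨h₁, h₂⟩ := hquiet hj (by omega)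
      exact emit_eq_none_iff.2 ⟨h₂ (by omega), not_isAccepting h₁⟩
  obtain ⟨hinactive, hnone⟩ := hquiet (k := j + 1) (by omega) hjt
  rw [Nat.cast_succ] at hinactive hnone
  have hsignal : (X t (j + 1)).signal = .none ↔ j + 1 < t := by
    refine ⟨fun h => hjt.lt_of_ne fun heq => ?_, hnone⟩
    have hfront : .load ≤ D.emit (X t (j + 1)) := by
      simpa [← heq] using h₀.trans (by simpa using monotone_emit hX 0 0 (Nat.zero_le (j + 1)))
    rw [emit_eq_none_iff.2 ⟨h, not_isAccepting hinactive⟩] at hfront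
    exact absurd hfront (by decide)
  rw [hX.apply_succ_add_one, cellRule_of_not_isActive hemit hinactive]
  simp only [hsignal]

/-- The diagonal that starts at the origin meets a fresh cell in its `i`-th step. -/
def MeetsFresh (X : ℕ → ℤ → Cell W) (i : ℕ) : Prop := (X i (i + 1)).tile = .fresh

open Classical in
theorem emit_diagonal (hX : IsSpaceTime D.cellRule X) (h₀ : D.emit (X 0 0) = .load) (j : ℕ) :
    D.emit (X j j) = if ∃ i < j, MeetsFresh X i then .clear else .load := by
  induction j with
  | zero => simpa using h₀
  | succ j ih =>
    have hsignal : (X (j + 1) (j + 1)).signal =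
        if ∃ i < j + 1, MeetsFresh X i then .clear else .load := by
      rw [hX.apply_succ_add_one]
      simp only [cellRule, ih, Nat.exists_lt_succ_right]
      by_cases hF : ∃ i < j, MeetsFresh X i
      · simp [hF, nextSignal]
      · by_cases hj : MeetsFresh X j
        · simp [hF, hj, show (X j (j + 1)).tile = .fresh from hj, nextSignal]
        · simp [hF, hj, nextSignal_load_of_ne_fresh hj]
    rw [Nat.cast_succ, emit_eq_signal, hsignal]
    left
    rw [hsignal]
    split_ifs <;> decide

/-- The initial row of the row machine that a `load` sent from the origin at time `0` writes. -/
noncomputable def loadedRow (D : RowMachine W) (X : ℕ → ℤ → Cell W) : ℕ → W :=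
  D.initialRow (truncate (MeetsFresh X) fun i => (X 0 (i + 1)).tile.readBit)

theorem step_iterate_loadedRow_of_le {t j : ℕ} (h : t ≤ j) :
    D.step^[t] (D.loadedRow X) j = D.loadedRow X j :=
  step_iterate_initialRow_of_le h

theorem work_diagonal_succ (hX : IsSpaceTime D.cellRule X) (h₀ : D.emit (X 0 0) = .load) (j : ℕ) :
    (X (j + 1) (j + 1)).work = D.loadedRow X (j + 1) := by
  rw [loadedRow, initialRow, hX.apply_succ_add_one]
  simp only [cellRule, emit_diagonal hX h₀]
  by_cases hF : ∃ i < j, MeetsFresh X i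
  · obtain ⟨i, hi, hF'⟩ := id hF
    simp [hF, nextWork, blank, truncate_of_exists ⟨i, hi.le, hF'⟩]
  by_cases hj : MeetsFresh X j
  · simp [hF, show (X j (j + 1)).tile = .fresh from hj, nextWork, blank,
      truncate_of_exists ⟨j, le_rfl, hj⟩]
  · have hF' : ∀ i ≤ j, ¬MeetsFresh X i := fun i hi h =>
      hi.lt_or_eq.elim (fun hlt => hF ⟨i, hlt, h⟩) fun heq => hj (heq ▸ h)
    simp only [hF, if_false, nextWork_load_of_ne_fresh hj, readBit_tile hX j,
      truncate_of_forall hF']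

theorem work_eq_step_iterate (hX : IsSpaceTime D.cellRule X) (h₀ : D.emit (X 0 0) = .load) {t : ℕ}
    (hr : ∀ s ≤ t, X (s + 1) 0 = ⟨.verifier .running, .none, D.step^[s] (D.loadedRow X) 0⟩)
    (ha : ∀ s < t, ¬D.accepting (D.step^[s] (D.loadedRow X) 0)) {j : ℕ} (hj : j ≤ t + 1) :
    (X (t + 1) j).work = D.step^[t] (D.loadedRow X) j := by
  induction t generalizing j with
  | zero =>
    interval_cases j
    · rw [Nat.cast_zero, hr 0 le_rfl]
    · simpa using work_diagonal_succ hX h₀ 0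
  | succ t ih =>
    replace ih {j : ℕ} := ih (fun s hs => hr s (by omega)) (fun s hs => ha s (by omega)) (j := j)
    rcases j with _ | j
    · rw [Nat.cast_zero, hr _ le_rfl]
    rw [Nat.cast_succ]
    rcases (show j ≤ t + 1 by omega).eq_or_lt with rfl | hjt
    · rw [step_iterate_loadedRow_of_le (by omega)]
      exact work_diagonal_succ hX h₀ (t + 1)
    have hsilent : ∀ s, 1 ≤ s → s ≤ t + 1 → D.emit (X s 0) = .none := by
      intro s h₁ h₂
      obtain ⟨s, rfl⟩ : ∃ u, s = u + 1 := ⟨s - 1, by omega⟩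
      rw [hr s (by omega), emit_eq_none_iff]
      exact ⟨rfl, fun h => ha s (by omega) h.2⟩
    rw [work_succ_of_quiet hX h₀.ge hsilent hjt]
    split_ifs with hjt'
    · rw [iterate_succ_apply', step, halfLineMap, ← step, ← ih (by omega), ← ih (by omega),
        ← ih (by omega)]
      push_cast
      rfl
    · obtain rfl : j = t := by omega
      rw [work_diagonal_succ hX h₀, step_iterate_loadedRow_of_le le_rfl]

theorem apply_succ_zero_of_boot (hX : IsSpaceTime D.cellRule X)
    (h₀ : X 0 0 = ⟨.verifier .running, .load, D.boot⟩) {t : ℕ}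
    (hq : ∀ s ≤ t, D.emit (X s (-1)) = .none)
    (ha : ∀ s < t, ¬D.accepting (D.step^[s] (D.loadedRow X) 0)) :
    X (t + 1) 0 = ⟨.verifier .running, .none, D.step^[t] (D.loadedRow X) 0⟩ := by
  induction t using Nat.strong_induction_on with
  | _ t ih =>
    rw [hX.apply_succ_zero]
    rcases t with _ | t
    · rw [h₀, cellRule_boot (hq 0 le_rfl)]
      rfl
    · replace ih (s : ℕ) (hs : s ≤ t) := ih s (by omega) (fun u hu => hq u (by omega))
        fun u hu => ha u (by omega)
      have hwork := work_eq_step_iterate hX (by simp [h₀, emit]) ih (fun s hs => ha s (by omega))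
        (Nat.le_add_left 1 t)
      rw [Nat.cast_one] at hwork
      rw [ih t le_rfl, cellRule_running (hq _ le_rfl) (ha t t.lt_succ_self), hwork,
        iterate_succ_apply', step, halfLineMap, ← step]

theorem apply_succ_zero_of_isAccepting (hX : IsSpaceTime D.cellRule X)
    (h₀ : (X 0 0).signal = .none) (ha : D.IsAccepting (X 0 0))
    (hq : ∀ s, D.emit (X s (-1)) = .none) (t : ℕ) :
    X (t + 1) 0 = ⟨.verifier .accepted, .none, D.blank⟩ := by
  induction t with
  | zero => rw [hX.apply_succ_zero, cellRule_of_isAccepting (hq 0) h₀ ha]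
  | succ t ih => rw [hX.apply_succ_zero, ih, cellRule_accepted (hq _)]

/-- The `clear` sent by a verifier that accepts silences and blanks the cells to its right. -/
theorem signal_work_of_isAccepting (hX : IsSpaceTime D.cellRule X) (h₀ : (X 0 0).signal = .none)
    (ha : D.IsAccepting (X 0 0)) (hq : ∀ s, D.emit (X s (-1)) = .none) {t j : ℕ} (hj : 1 ≤ j)
    (hjt : j ≤ t) : (j < t → (X t j).signal = .none) ∧ (X t j).work = D.blank := by
  have hclear : D.emit (X 0 0) = .clear := if_pos ⟨h₀, ha⟩
  have haccepted := apply_succ_zero_of_isAccepting hX h₀ ha hq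
  have hsilent (s : ℕ) (hs : 1 ≤ s) : D.emit (X s 0) = .none := by
    obtain ⟨s, rfl⟩ : ∃ u, s = u + 1 := ⟨s - 1, by omega⟩
    rw [haccepted, emit_eq_none_iff]
    exact ⟨rfl, fun h => by cases h.1⟩
  have hfront : .load ≤ D.emit (X 0 0) := by rw [hclear]; decide
  refine ⟨(quiet_behind_signal hX hfront (fun s h _ => hsilent s h) hj hjt).2, ?_⟩
  induction t generalizing j with
  | zero => omega
  | succ t ih =>
    obtain ⟨j, rfl⟩ : ∃ k, j = k + 1 := ⟨j - 1, by omega⟩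
    rw [Nat.cast_succ]
    rcases (show j ≤ t by omega).eq_or_lt with rfl | hjt'
    · have hemit : D.emit (X j j) = .clear := by
        refine le_antisymm (by cases D.emit (X j j) <;> decide) (hclear.ge.trans ?_)
        simpa using monotone_emit hX 0 0 j.zero_le
      rw [hX.apply_succ_add_one, cellRule, hemit, nextWork]
    · have hblank {k : ℕ} (hk : k ≤ t) : (X t k).work = D.blank := by
        rcases k with _ | k
        · obtain ⟨s, rfl⟩ : ∃ u, t = u + 1 := ⟨t - 1, by omega⟩
          rw [Nat.cast_zero, haccepted]
        · exact ih k.succ_pos hk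
      have h₁ := hblank (k := j) (by omega)
      have h₂ : (X t (j + 1)).work = D.blank := by simpa using hblank (k := j + 1) hjt'
      rw [work_succ_of_quiet hX hfront (fun s h _ => hsilent s h) hjt', h₁, h₂]
      split_ifs with h
      · have h₃ : (X t (j + 2)).work = D.blank := by simpa using hblank (k := j + 2) h
        rw [h₃]
        exact D.rule_sym _ _ _
      · rfl

end SpaceTime

end RowMachine

section Soundness

theorem mem_cylinder_iff {B : Type*} {y : ℤ → B} {s : List B} {i : ℤ} :
    y ∈ cylinder s i ↔ ∀ j c, s[j]? = some c → y (i + (j : ℕ)) = c := by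
  refine (word_eq_iff y i s).trans ⟨fun h j c hc => ?_, fun h j => h _ _ (by simp)⟩
  obtain ⟨hj, rfl⟩ := List.getElem?_eq_some_iff.1 hc
  exact h ⟨j, hj⟩

namespace RowMachine

variable {W : Type*} (D : RowMachine W)

/-- The word that shows a verifier that has accepted the beginning `u` of its input. -/
def acceptedWord (u : List Bool) : List (Cell W) :=
  ⟨.verifier .accepted, .none, D.blank⟩ :: u.map fun b => ⟨.bit b, .none, D.blank⟩

variable {D} {X : ℕ → ℤ → Cell W}

theorem mem_cylinder_acceptedWord {y : ℤ → Cell W} {u : List Bool} {i : ℤ} :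
    y ∈ cylinder (D.acceptedWord u) i ↔ y i = ⟨.verifier .accepted, .none, D.blank⟩ ∧
      ∀ j b, u[j]? = some b → y (i + ((j : ℕ) + 1)) = ⟨.bit b, .none, D.blank⟩ := by
  rw [mem_cylinder_iff, ← Nat.and_forall_add_one]
  simp only [acceptedWord, List.getElem?_cons_zero, List.getElem?_cons_succ, List.getElem?_map,
    Option.map_eq_some_iff, Option.some.injEq, forall_eq', Nat.cast_zero, add_zero, Nat.cast_succ,
    forall_exists_index, and_imp, forall_apply_eq_imp_iff₂]

theorem cellRule_of_emit_ne_none {l c r : Cell W} (h : D.emit l ≠ .none) :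
    D.cellRule l c r = ⟨.verifier .running, .load, D.boot⟩ ∨
      ¬(D.cellRule l c r).tile.IsActive := by
  simp only [cellRule]
  generalize D.emit l = s at *
  cases s <;> rcases hc : c.tile with _ | _ | ⟨⟨⟩⟩ <;>
    simp_all [nextTile, nextSignal, nextWork, Tile.IsActive]

theorem exists_boot_of_isActive (hX : IsSpaceTime D.cellRule X) {s t : ℕ} (hst : s < t)
    (hs : D.emit (X s (-1)) ≠ .none) (ht : (X t 0).tile.IsActive) :
    ∃ τ, s < τ ∧ τ ≤ t ∧ X τ 0 = ⟨.verifier .running, .load, D.boot⟩ ∧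
      ∀ u, τ ≤ u → u < t → D.emit (X u (-1)) = .none := by
  have hsignal {t : ℕ} (h : D.emit (X t (-1)) ≠ .none) :
      X (t + 1) 0 = ⟨.verifier .running, .load, D.boot⟩ ∨ ¬(X (t + 1) 0).tile.IsActive := by
    rw [hX.apply_succ_zero]
    exact cellRule_of_emit_ne_none h
  induction t, hst using Nat.le_induction with
  | base =>
    exact ⟨s + 1, s.lt_succ_self, le_rfl, (hsignal hs).resolve_right (not_not.2 ht),
      fun u h₁ h₂ => by omega⟩
  | succ t hst ih =>
    by_cases h : D.emit (X t (-1)) = .none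
    · have hactive : (X t 0).tile.IsActive := by
        by_contra hc
        rw [hX.apply_succ_zero, cellRule_of_not_isActive h hc] at ht
        exact hc ht
      obtain ⟨τ, hsτ, hτt, hτ, hq⟩ := ih hactive
      refine ⟨τ, hsτ, by omega, hτ, fun u h₁ h₂ => ?_⟩
      rcases (Nat.lt_succ_iff.1 h₂).eq_or_lt with rfl | hu
      exacts [h, hq u h₁ hu]
    · exact ⟨t + 1, by omega, le_rfl, (hsignal h).resolve_right (not_not.2 ht),
        fun u h₁ h₂ => by omega⟩

theorem exists_accepting_of_boot (hX : IsSpaceTime D.cellRule X)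
    (h₀ : X 0 0 = ⟨.verifier .running, .load, D.boot⟩) {t : ℕ}
    (hq : ∀ s < t, D.emit (X s (-1)) = .none) (ht : (X t 0).tile = .verifier .accepted) :
    ∃ s, D.accepting (D.step^[s] (D.loadedRow X) 0) := by
  by_contra! h
  rcases t with _ | t
  · rw [h₀] at ht
    cases ht
  · rw [apply_succ_zero_of_boot hX h₀ (fun s hs => hq s (by omega))
      fun s _ => by simpa using h s] at ht
    cases ht

theorem exists_accepts_of_truncate {F : ℕ → Prop} {b : ℕ → Bool} {N : ℕ} (hF : ∀ j < N, ¬F j)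
    (h : ∃ s, D.accepting (D.step^[s] (D.initialRow (truncate F b)) 0)) :
    ∃ L ≥ N, D.Accepts ((List.range L).map b) := by
  classical
  by_cases hE : ∃ E, F E
  · refine ⟨Nat.find hE, (Nat.le_find_iff hE N).2 hF, ?_⟩
    rwa [truncate_eq_getElem? (Nat.find_spec hE) fun i => Nat.find_min hE] at h
  · push Not at hE
    obtain ⟨s, hs⟩ := h
    refine ⟨max N s, le_max_left _ _, s, ?_⟩
    rw [← hs]
    congr 1
    refine halfLineMap_iterate_congr _ _ fun i hi => ?_
    rcases i with _ | i
    · rfl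
    · have hi' : i < max N s := lt_max_of_lt_right (by omega)
      simp only [initialRow, truncate_of_forall fun i _ => hE i]
      simp [List.getElem?_range hi']

theorem exists_ne_fresh_of_meetsFresh (hX : IsSpaceTime D.cellRule X)
    (h₀ : D.emit (X 0 0) = .load) {j : ℕ} (hj : MeetsFresh X j) :
    ∃ i ≤ j, MeetsFresh X i ∧ (X (i + 1) (i + 1)).tile ≠ .fresh := by
  classical
  have hE : ∃ i, MeetsFresh X i := ⟨j, hj⟩
  refine ⟨Nat.find hE, Nat.find_min' hE hj, Nat.find_spec hE, ?_⟩
  have hload : D.emit (X (Nat.find hE) (Nat.find hE)) = .load := by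
    rw [emit_diagonal hX h₀, if_neg]
    exact fun ⟨i, hi, h⟩ => Nat.find_min hE hi h
  have hfresh : (X (Nat.find hE) (Nat.find hE + 1)).tile = .fresh := Nat.find_spec hE
  simp [hX.apply_succ_add_one, cellRule, hload, nextTile, hfresh]

theorem eventually_fresh_imp (hX : IsSpaceTime D.cellRule X) (i : ℤ) :
    ∀ᶠ τ in atTop, (X τ i).tile = .fresh → ∀ t, (X t i).tile = .fresh := by
  by_cases h : ∀ t, (X t i).tile = .fresh
  · exact .of_forall fun τ _ => h
  · push Not at h
    obtain ⟨t, ht⟩ := h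
    filter_upwards [eventually_ge_atTop t] with τ hτ hfresh
    exact absurd hfresh (tile_induction hX (p := (· ≠ .fresh)) (fun _ _ => nextTile_ne_fresh) hτ ht)

theorem exists_late_loadedRow_accepting (hX : IsSpaceTime D.cellRule X)
    (hsignal : ∀ n : ℕ, ∃ i ≤ (-n : ℤ), (X 0 i).signal ≠ .none)
    (haccepted : ∃ᶠ t in atTop, (X t 0).tile = .verifier .accepted) (T : ℕ) :
    ∃ τ ≥ T, D.emit (X τ 0) = .load ∧
      ∃ s, D.accepting (D.step^[s] (D.loadedRow fun t => X (τ + t)) 0) := by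
  obtain ⟨i, hi, hne⟩ := hsignal (T + 1)
  obtain ⟨s, rfl⟩ : ∃ s : ℕ, i = -1 - s := ⟨(-1 - i).toNat, by omega⟩
  have hs : D.emit (X s (-1)) ≠ .none := by
    have h : D.emit (X 0 (-1 - s)) ≤ D.emit (X s (-1)) := by
      simpa using monotone_emit hX 0 (-1 - s) s.zero_le
    exact Signal.none_lt_iff.1 ((Signal.none_lt_iff.2 hne).trans_le (signal_le_emit.trans h))
  obtain ⟨t, hst, ht⟩ := (frequently_atTop.1 haccepted) (s + 1)
  obtain ⟨τ, hsτ, hτt, hboot, hq⟩ := exists_boot_of_isActive hX hst hs (.inr ht)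
  refine ⟨τ, by omega, by simp [hboot, emit], ?_⟩
  refine exists_accepting_of_boot (t := t - τ) (by simpa using hX.translate τ 0) hboot
    (fun u hu => hq _ (by omega) (by omega)) ?_
  rwa [Nat.add_sub_cancel' hτt]

/-- A `load` that arrives late enough can meet no fresh cell in a given window, since it would
overwrite the first one. -/
theorem frequently_accepts (hX : IsSpaceTime D.cellRule X)
    (hsignal : ∀ n : ℕ, ∃ i ≤ (-n : ℤ), (X 0 i).signal ≠ .none)
    (haccepted : ∃ᶠ t in atTop, (X t 0).tile = .verifier .accepted) :
    ∃ᶠ L in atTop, D.Accepts ((List.range L).map fun j : ℕ => (X 0 (j + 1)).tile.readBit) := by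
  refine frequently_atTop.2 fun N => ?_
  obtain ⟨T, hT⟩ := eventually_atTop.1 <| (eventually_all_finset (Finset.range N)).2
    fun j _ => eventually_fresh_imp hX (j + 1)
  obtain ⟨τ, hτ, hload, haccepting⟩ := exists_late_loadedRow_accepting hX hsignal haccepted T
  have hY : IsSpaceTime D.cellRule fun t => X (τ + t) := by simpa using hX.translate τ 0
  simp only [loadedRow, add_zero, readBit_tile hX τ] at haccepting
  refine exists_accepts_of_truncate (fun j hj hfresh => ?_) haccepting
  obtain ⟨i, hij, hi, hne⟩ := exists_ne_fresh_of_meetsFresh hY hload hfresh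
  exact hne (hT (τ + i) (by omega) i (Finset.mem_range.2 (by omega)) hi _)

instance : TopologicalSpace (Cell W) := ⊥

instance : DiscreteTopology (Cell W) := ⟨rfl⟩

theorem setOf_signal_mem_residual (D : RowMachine W) :
    {x : ℤ → Cell W | ∀ n : ℕ, ∃ i ≤ (-n : ℤ), (x i).signal ≠ .none} ∈ residual _ := by
  rw [ofPred_forall]
  exact countable_iInter_mem.2 fun n => setOf_exists_apply_mem_residual
    (isOpen_discrete {c : Cell W | c.signal ≠ .none})
    ⟨⟨.fresh, .clear, D.blank⟩, Signal.noConfusion⟩ (Iic_infinite _)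

theorem setOf_readBit_mem_residual (D : RowMachine W) :
    {x : ℤ → Cell W | ∀ n : ℤ, ∃ i ≥ n, (x i).tile.readBit = false} ∈ residual _ := by
  rw [ofPred_forall]
  exact countable_iInter_mem.2 fun n => setOf_exists_apply_mem_residual
    (isOpen_discrete {c : Cell W | c.tile.readBit = false})
    ⟨⟨.fresh, .none, D.blank⟩, rfl⟩ (Ici_infinite _)

theorem exists_frequently_accepts_of_acceptedWord_mem_lang {v : List Bool}
    (hv : D.acceptedWord v ∈ lang (genLimitSet (localMap D.cellRule))) :
    ∃ b : ℕ → Bool, (∀ j c, v[j]? = some c → b j = c) ∧ (∃ᶠ j in atTop, b j = false) ∧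
      ∃ᶠ L in atTop, D.Accepts ((List.range L).map b) := by
  by_contra hb
  refine notMem_lang_genLimitSet
    (inter_mem (setOf_signal_mem_residual D) (setOf_readBit_mem_residual D)) ?_ hv
  rintro x ⟨hsignal, hbit⟩ p
  by_contra hcylinder
  replace hcylinder := not_eventually.1 hcylinder
  simp only [not_not, mem_cylinder_acceptedWord] at hcylinder
  set X : ℕ → ℤ → Cell W := fun t i => (localMap D.cellRule)^[0 + t] x (p + i)
  have hX : IsSpaceTime D.cellRule X := (isSpaceTime_iterate D.cellRule x).translate 0 p
  refine hb ⟨fun j => (X 0 (j + 1)).tile.readBit, fun j c hc => ?_, ?_, ?_⟩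
  · obtain ⟨t, ht⟩ := hcylinder.exists
    change (X 0 (j + 1)).tile.readBit = c
    rw [← readBit_tile hX t]
    simp [X, ht.2 j c hc, Tile.readBit]
  · refine frequently_atTop.2 fun N => ?_
    obtain ⟨i, hi, hbit⟩ := hbit (p + (N + 1))
    refine ⟨(i - p - 1).toNat, by omega, ?_⟩
    rw [← hbit]
    simp only [X, add_zero, iterate_zero, id_eq]
    congr 3
    omega
  · refine frequently_accepts hX (fun n => ?_) (hcylinder.mono fun t ht => by simp [X, ht.1])
    obtain ⟨i, hi, hne⟩ := hsignal (n + p.natAbs)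
    exact ⟨i - p, by omega, by simpa [X] using hne⟩

end RowMachine

end Soundness

section Completeness

theorem cylinder_nonempty_s5 {B : Type*} [Nonempty B] (s : List B) (i : ℤ) :
    (cylinder s i).Nonempty := by
  refine ⟨fun k => s[(k - i).toNat]?.getD (Classical.arbitrary B), mem_cylinder_iff.2 ?_⟩
  intro j c hc
  simp [hc]

namespace RowMachine

variable {W : Type*} {D : RowMachine W} {X : ℕ → ℤ → Cell W}

theorem truncate_accepting {F : ℕ → Prop} {b : ℕ → Bool} {u : List Bool}
    (hF : ∃ E, F E) (huF : ∀ j < u.length, ¬F j) (hub : ∀ j c, u[j]? = some c → b j = c)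
    (hu : ∀ z, D.Accepts (u ++ z)) :
    ∃ s, D.accepting (D.step^[s] (D.initialRow (truncate F b)) 0) := by
  classical
  have hprefix : u <+: (List.range (Nat.find hF)).map b := by
    have hle : u.length ≤ Nat.find hF := (Nat.le_find_iff hF _).2 huF
    refine List.prefix_iff_getElem?.2 fun j hj => ?_
    rw [List.getElem?_map, List.getElem?_range (hj.trans_le hle), Option.map_some,
      hub j u[j] (List.getElem?_eq_getElem hj)]
  obtain ⟨z, hz⟩ := hprefix
  rw [truncate_eq_getElem? (Nat.find_spec hF) fun i => Nat.find_min hF, ← hz]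
  exact hu z

theorem exists_mem_cylinder_acceptedWord (hX : IsSpaceTime D.cellRule X)
    (h₀ : X 0 0 = ⟨.verifier .running, .load, D.boot⟩) (hq : ∀ s, D.emit (X s (-1)) = .none)
    (hfresh : ∃ E, MeetsFresh X E) {u : List Bool}
    (hbit : ∀ (j : ℕ) b, u[j]? = some b → (X 0 (j + 1)).tile = .bit b)
    (hu : ∀ z, D.Accepts (u ++ z)) : ∃ t, X t ∈ cylinder (D.acceptedWord u) 0 := by
  replace hbit (t j : ℕ) (b : Bool) (hj : u[j]? = some b) : (X t (j + 1)).tile = .bit b :=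
    tile_induction hX (p := (· = .bit b)) (fun _ _ => nextTile_of_tile_eq_bit) t.zero_le
      (hbit j b hj)
  have haccepting : ∃ s, D.accepting (D.step^[s] (D.loadedRow X) 0) := by
    refine truncate_accepting hfresh (fun j hj h => ?_) (fun j c hc => ?_) hu
    · exact Tile.noConfusion ((hbit j j _ (List.getElem?_eq_getElem hj)).symm.trans h)
    · rw [hbit 0 j c hc, Tile.readBit]
  classical
  set s := Nat.find haccepting
  have hs : X (s + 1) 0 = ⟨.verifier .running, .none, D.step^[s] (D.loadedRow X) 0⟩ :=
    apply_succ_zero_of_boot hX h₀ (fun s _ => hq s) fun _ => Nat.find_min haccepting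
  have hY : IsSpaceTime D.cellRule fun t => X (s + 1 + t) := by simpa using hX.translate (s + 1) 0
  have haccept : D.IsAccepting (X (s + 1) 0) := by
    rw [hs]
    exact ⟨rfl, Nat.find_spec haccepting⟩
  have hnone : (X (s + 1) 0).signal = .none := by rw [hs]
  refine ⟨s + 1 + (u.length + 1), mem_cylinder_acceptedWord.2 ⟨?_, fun j b hj => ?_⟩⟩
  · exact apply_succ_zero_of_isAccepting hY hnone haccept (fun _ => hq _) _
  · have hju : j < u.length := (List.getElem?_eq_some_iff.1 hj).1
    obtain ⟨hsignal, hwork⟩ := signal_work_of_isAccepting hY hnone haccept (fun _ => hq _)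
      (t := u.length + 1) j.succ_pos (by omega)
    rw [Nat.cast_succ] at hsignal hwork
    rw [zero_add]
    exact Cell.ext (hbit _ _ _ hj) (hsignal (by omega)) hwork

theorem bit_of_le (hX : IsSpaceTime D.cellRule X) {a : ℤ} {b : Bool} {s : Signal}
    (h : ∀ i ≤ a, (X 0 i).tile = .bit b ∧ (X 0 i).signal = s) (t : ℕ) :
    ∀ i ≤ a, (X t i).tile = .bit b ∧ (X t i).signal = s := by
  induction t with
  | zero => exact h
  | succ t ih =>
    intro i hi
    obtain ⟨htile, hsignal⟩ := ih (i - 1) (by omega)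
    rw [hX.apply_succ, cellRule, emit_of_tile_eq_bit htile, hsignal]
    refine ⟨nextTile_of_tile_eq_bit (ih i hi).1, ?_⟩
    simp only [(ih i hi).1]
    cases s <;> rfl

theorem eventually_launch_add (hX : IsSpaceTime D.cellRule X) {i : ℤ}
    (h : ∀ᶠ t in atTop, (X t i).signal = .launch) (k : ℕ) :
    ∀ᶠ t in atTop, (X t (i + k)).signal = .launch := by
  induction k with
  | zero => simpa using h
  | succ k ih =>
    obtain ⟨T, hT⟩ := eventually_atTop.1 ih
    refine eventually_atTop.2 ⟨T + 2, fun t ht => ?_⟩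
    obtain ⟨t, rfl⟩ : ∃ s, t = s + 2 := ⟨t - 2, by omega⟩
    have hemit {s : ℕ} (hs : T ≤ s) : D.emit (X s (i + k)) = .launch := by
      rw [emit_eq_signal (.inl _), hT s hs]
      simp [hT s hs]
    rw [Nat.cast_succ, ← add_assoc, hX.apply_succ_add_one, cellRule, hemit (by omega)]
    refine nextSignal_launch_of_ne_armed ?_
    rw [hX.apply_succ_add_one, cellRule, hemit (by omega)]
    exact nextTile_launch_ne_armed

theorem le_emit_of_le_signal (hX : IsSpaceTime D.cellRule X) (t : ℕ) :
    (X 0 (-1 - t)).signal ≤ D.emit (X t (-1)) := by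
  have h := monotone_emit hX 0 (-1 - t) t.zero_le
  simp only [zero_add, Nat.cast_zero, add_zero, sub_add_cancel] at h
  exact signal_le_emit.trans h

theorem armed_of_forall_ne_launch (hX : IsSpaceTime D.cellRule X) {e τ : ℕ}
    (hleft : ∀ i : ℤ, i < -1 - e → (X 0 i).signal = .launch)
    (hload : (X 0 (-1 - e)).signal = .load) (h₀ : (X 0 0).tile.IsVerifier)
    (hτ : ∀ t, e < t → t < τ → (X t (-1)).signal ≠ .launch) (heτ : e < τ) :
    (X τ 0).tile = .verifier .armed := by
  have harm {t : ℕ} (h : .load ≤ D.emit (X t (-1))) : (X (t + 1) 0).tile = .verifier .armed := by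
    rw [hX.apply_succ_zero]
    exact nextTile_of_le_of_isVerifier h
      (tile_induction hX (fun _ _ => nextTile_isVerifier) t.zero_le h₀)
  obtain ⟨t, rfl⟩ : ∃ t, τ = t + 1 := ⟨τ - 1, by omega⟩
  refine harm ?_
  have hle := le_emit_of_le_signal hX t
  rcases (show e ≤ t by omega).eq_or_lt with rfl | het
  · rwa [hload] at hle
  · rw [hleft _ (by omega)] at hle
    have hne : D.emit (X t (-1)) ≠ .launch := fun h =>
      hτ t het t.lt_succ_self (by rw [← emit_eq_signal (D := D) (.inr (by simp [h])), h])
    revert hle hne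
    generalize D.emit (X t (-1)) = s
    revert s
    decide

theorem exists_launch_armed (hX : IsSpaceTime D.cellRule X) {e : ℕ} {b : Bool}
    (hleft : ∀ i : ℤ, i < -1 - e → (X 0 i).tile = .bit b ∧ (X 0 i).signal = .launch)
    (hload : (X 0 (-1 - e)).signal = .load) (h₀ : (X 0 0).tile.IsVerifier) :
    ∃ τ > e, (X τ (-1)).signal = .launch ∧ (X τ 0).tile = .verifier .armed := by
  have hlaunch : ∀ᶠ t in atTop, (X t (-2 - e + (e + 1 : ℕ))).signal = .launch :=
    eventually_launch_add hX (.of_forall fun t =>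
      (bit_of_le hX (a := -2 - e) (fun i hi => hleft i (by omega)) t _ le_rfl).2) _
  rw [show (-2 - e + (e + 1 : ℕ) : ℤ) = -1 by omega] at hlaunch
  classical
  have hex : ∃ τ, e < τ ∧ (X τ (-1)).signal = .launch :=
    ((eventually_gt_atTop e).and hlaunch).exists
  obtain ⟨hτ, hsignal⟩ := Nat.find_spec hex
  exact ⟨Nat.find hex, hτ, hsignal, armed_of_forall_ne_launch hX (fun i hi => (hleft i hi).2) hload
    h₀ (fun t ht h hl => Nat.find_min hex h ⟨ht, hl⟩) hτ⟩

theorem signal_eq_launch_of_add (hX : IsSpaceTime D.cellRule X) {t : ℕ} {i : ℤ} {s : ℕ}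
    (h : (X (t + s) (i + s)).signal = .launch) : (X t i).signal = .launch := by
  have hemit : D.emit (X (t + s) (i + s)) = .launch := by
    rw [emit_eq_signal (.inl (by simp [h])), h]
  have hne : .none < (X t i).signal :=
    (signal_mem_Ioo_of_add hX (s := s) (by rw [h]; decide)).1
  have hle : (X t i).signal ≤ D.emit (X (t + s) (i + s)) := by
    simpa using signal_le_emit.trans (monotone_emit hX t i s.zero_le)
  rw [hemit] at hle
  revert hle hne
  generalize (X t i).signal = s
  revert s
  decide

theorem emit_eq_none_behind_launch (hX : IsSpaceTime D.cellRule X) {b : Bool}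
    (hleft : ∀ i : ℤ, i < 0 → (X 0 i).tile = .bit b ∧ (X 0 i).signal = .none)
    (h₀ : (X 0 0).tile = .bit b) {τ : ℕ} (hτ : (X τ τ).signal = .launch) {t : ℕ} (ht : τ < t) :
    D.emit (X t τ) = .none := by
  have hsilent (s : ℕ) (hs : 1 ≤ s) : D.emit (X s 0) = .none := by
    obtain ⟨s, rfl⟩ : ∃ u, s = u + 1 := ⟨s - 1, by omega⟩
    obtain ⟨htile, hsignal⟩ := bit_of_le hX (a := -1) (fun i hi => hleft i (by omega)) s _ le_rfl
    have hbit : (X s 0).tile = .bit b :=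
      tile_induction hX (p := (· = .bit b)) (fun _ _ => nextTile_of_tile_eq_bit) s.zero_le h₀
    have hnone : D.emit (X s (-1)) = .none := by rw [emit_of_tile_eq_bit htile, hsignal]
    rw [hX.apply_succ_zero, cellRule_of_not_isActive hnone (by simp [hbit, Tile.IsActive])]
    exact emit_of_tile_eq_bit hbit
  have hfront (j : ℕ) (hj : 1 ≤ j) (hjτ : j ≤ τ) : ¬(X j j).tile.IsActive := by
    obtain ⟨k, rfl⟩ : ∃ k, j = k + 1 := ⟨j - 1, by omega⟩
    have hlaunch : (X (k + 1) (k + 1 : ℕ)).signal = .launch := by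
      obtain ⟨s, rfl⟩ := Nat.exists_eq_add_of_le hjτ
      exact signal_eq_launch_of_add hX (s := s) (by exact_mod_cast hτ)
    rw [Nat.cast_succ, hX.apply_succ_add_one] at hlaunch ⊢
    exact not_isActive_nextTile_of_nextSignal_eq_launch hlaunch
  rcases τ.eq_zero_or_pos with rfl | hτ₀
  · exact hsilent t (by omega)
  · obtain ⟨hinactive, hnone⟩ :=
      quiet_behind_front hX hfront (fun s hs _ => hsilent s hs) hτ₀ le_rfl ht.le
    exact emit_eq_none_iff.2 ⟨hnone ht, not_isAccepting hinactive⟩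

/-- Of the `launch` signals, only the one that starts the verifier and its predecessors are kept. -/
theorem exists_boot_quiet {x : ℤ → Cell W} {e : ℕ} {b : Bool}
    (hleft : ∀ i : ℤ, i < -1 - e → (x i).tile = .bit b ∧ (x i).signal = .launch)
    (hload : (x (-1 - e)).signal = .load) (h₀ : (x 0).tile.IsVerifier) :
    ∃ (y : ℤ → Cell W) (τ : ℕ), e < τ ∧ (∀ i ≥ (-1 - e : ℤ), y i = x i) ∧
      (localMap D.cellRule)^[τ] y 0 = ⟨.verifier .running, .load, D.boot⟩ ∧
      ∀ t ≥ τ, D.emit ((localMap D.cellRule)^[t] y (-1)) = .none := by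
  have hX := isSpaceTime_iterate D.cellRule x
  obtain ⟨τ, hτ, hlaunch, harmed⟩ := exists_launch_armed hX hleft hload h₀
  set y : ℤ → Cell W := fun i => if i < -1 - τ then ⟨.bit b, .none, D.blank⟩ else x i
  have hy (i : ℤ) (hi : -1 - τ ≤ i) : y i = x i := if_neg hi.not_gt
  have hY := isSpaceTime_iterate D.cellRule y
  have hXY (i : ℤ) (hi : -1 ≤ i) :
      (localMap D.cellRule)^[τ] x i = (localMap D.cellRule)^[τ] y i :=
    hX.congr_of_le hY (a := -1 - τ) (fun i hi => (hy i hi).symm) τ i (by omega)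
  rw [hXY _ le_rfl] at hlaunch
  rw [hXY 0 (by decide)] at harmed
  refine ⟨y, τ + 1, by omega, fun i hi => hy i (by omega), ?_, fun t ht => ?_⟩
  · rw [hY.apply_succ_zero]
    exact cellRule_launch (by rw [emit_eq_signal (.inl (by simp [hlaunch])), hlaunch]) harmed
  · have hZ : IsSpaceTime D.cellRule fun t i => (localMap D.cellRule)^[0 + t] y (-1 - τ + i) :=
      hY.translate 0 (-1 - τ)
    have h := emit_eq_none_behind_launch hZ (b := b) (τ := τ) (t := t) (fun i hi => ?_) ?_ ?_
      (by omega)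
    · simpa using h
    · have : y (-1 - τ + i) = ⟨.bit b, .none, D.blank⟩ := if_pos (by omega)
      simp [this]
    · simpa [hy] using (hleft (-1 - τ) (by omega)).1
    · simpa using hlaunch

theorem exists_emit_load_of_ne_fresh (hX : IsSpaceTime D.cellRule X) {i : ℤ}
    (h₀ : (X 0 (i + 1)).tile = .fresh) {t : ℕ} (ht : (X t (i + 1)).tile ≠ .fresh) :
    ∃ s < t, (X s (i + 1)).tile = .fresh ∧ D.emit (X s i) = .load := by
  induction t with
  | zero => exact absurd h₀ ht
  | succ t ih =>
    by_cases h : (X t (i + 1)).tile = .fresh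
    · refine ⟨t, t.lt_succ_self, h, ?_⟩
      rw [hX.apply_succ_add_one, cellRule] at ht
      revert ht
      generalize D.emit (X t i) = s
      cases s <;> simp [nextTile, h, IsAccepting]
    · obtain ⟨s, hs, hload⟩ := ih h
      exact ⟨s, hs.trans t.lt_succ_self, hload⟩

/-- A cell stops being fresh when a `load` reaches it, which goes on as a `clear`. So on every
diagonal this happens at most once, and a cell beyond `M` is only reached by the diagonals of the
signals that were present at the beginning. -/
theorem exists_meetsFresh (hX : IsSpaceTime D.cellRule X) {M : ℤ}
    (h : ∀ i > M, (X 0 i).tile = .fresh ∧ (X 0 i).signal = .none) (τ : ℕ) :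
    ∃ E, MeetsFresh (fun t => X (τ + t)) E := by
  by_contra! hE
  have hload (k : ℕ) (hk : k ∈ Ici M.toNat) :
      ∃ s < τ + k, (X s (k + 1)).tile = .fresh ∧ D.emit (X s k) = .load :=
    exists_emit_load_of_ne_fresh hX (h _ (by have := mem_Ici.1 hk; omega)).1 (hE k)
  choose! s hs hfresh hs_load using hload
  have hmaps : MapsTo (fun k : ℕ => (k : ℤ) - s k) (Ici M.toNat) (Icc (-τ) M) := by
    intro k hk
    refine ⟨by have := hs k hk; grind, ?_⟩
    by_contra! hM
    have hsignal := signal_mem_Ioo_of_add hX (t := 0) (i := k - s k) (s := s k)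
    rw [zero_add, sub_add_cancel, ← emit_eq_signal (D := D) (.inr (by simp [hs_load k hk])),
      hs_load k hk] at hsignal
    exact (hsignal (by decide)).1.ne' (h _ hM).2
  obtain ⟨k, hk, l, hl, hkl, heq⟩ :=
    (Ici_infinite M.toNat).exists_lt_map_eq_of_mapsTo hmaps (finite_Icc _ _)
  obtain ⟨n, rfl⟩ : ∃ n, l = k + 1 + n := Nat.exists_eq_add_of_le hkl
  have hsl : s (k + 1 + n) = s k + 1 + n := by omega
  have hclear : (X (s k + 1) (k + 1)).signal = .clear := by
    rw [hX.apply_succ_add_one, cellRule, hs_load k hk, hfresh k hk, nextSignal]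
  have hle : (X (s k + 1) (k + 1)).signal ≤ D.emit (X (s k + 1 + n) (k + 1 + n)) := by
    simpa using signal_le_emit.trans (monotone_emit hX (s k + 1) (k + 1) n.zero_le)
  have hl_load := hs_load _ hl
  rw [hsl] at hl_load
  push_cast at hl_load
  rw [hclear, hl_load] at hle
  exact absurd hle (by decide)

/-- The configuration `x`, with the cells beyond distance `M` from the origin replaced by fresh
cells on the right, and on the left by a `load` that arms the verifier at the origin, preceded by
`launch` signals that start it. -/
def probe (D : RowMachine W) (x : ℤ → Cell W) (M : ℕ) (i : ℤ) : Cell W :=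
  if i < -1 - M then ⟨.bit false, .launch, D.blank⟩
  else if i = -1 - M then ⟨.bit false, .load, D.blank⟩
  else if i ≤ M then x i
  else ⟨.fresh, .none, D.blank⟩

theorem probe_apply {x : ℤ → Cell W} {M : ℕ} {i : ℤ} (hi : i.natAbs ≤ M) :
    D.probe x M i = x i := by
  rw [probe, if_neg (by omega), if_neg (by omega), if_pos (by omega)]

theorem exists_iterate_mem_cylinder_acceptedWord {u : List Bool}
    (hu : ∀ z, D.Accepts (u ++ z)) {x : ℤ → Cell W} (hx : x ∈ cylinder (D.acceptedWord u) 0)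
    {M : ℕ} (hM : u.length ≤ M) :
    ∃ y, (∀ i : ℤ, i.natAbs ≤ M → y i = x i) ∧
      ∃ t ≥ M, (localMap D.cellRule)^[t] y ∈ cylinder (D.acceptedWord u) 0 := by
  obtain ⟨hx₀, hxu⟩ := mem_cylinder_acceptedWord.1 hx
  obtain ⟨y, τ, hτ, hy, hboot, hq⟩ := exists_boot_quiet (D := D) (x := D.probe x M) (e := M)
    (b := false) (fun i hi => by simp [probe, hi]) (by simp [probe])
    ⟨.accepted, by simp [probe_apply, hx₀]⟩
  have hyx (i : ℤ) (hi : i.natAbs ≤ M) : y i = x i := by rw [hy i (by omega), probe_apply hi]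
  have hY := isSpaceTime_iterate D.cellRule y
  have hZ : IsSpaceTime D.cellRule fun t => (localMap D.cellRule)^[τ + t] y := by
    simpa using hY.translate τ 0
  have hmeets := exists_meetsFresh hY (M := M)
    (fun i hi => by simp [hy i (by omega), probe, show ¬i < -1 - M by omega,
      show i ≠ -1 - M by omega, hi.not_ge]) τ
  have hbit (j : ℕ) (b : Bool) (hj : u[j]? = some b) :
      ((localMap D.cellRule)^[τ + 0] y (j + 1)).tile = .bit b := by
    have hju : j < u.length := (List.getElem?_eq_some_iff.1 hj).1
    refine tile_induction hY (p := (· = .bit b)) (fun _ _ => nextTile_of_tile_eq_bit)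
      (τ + 0).zero_le ?_
    have hxj := hxu j b hj
    rw [zero_add] at hxj
    rw [iterate_zero, id_eq, hyx (j + 1) (by omega), hxj]
  obtain ⟨t, ht⟩ :=
    exists_mem_cylinder_acceptedWord hZ hboot (fun s => hq _ (by omega)) hmeets hbit hu
  exact ⟨y, hyx, τ + t, by omega, ht⟩

theorem acceptedWord_mem_lang [Finite W] {u : List Bool} (hu : ∀ z, D.Accepts (u ++ z)) :
    D.acceptedWord u ∈ lang (genLimitSet (localMap D.cellRule)) := by
  have : Nonempty (Cell W) := ⟨⟨.fresh, .none, D.blank⟩⟩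
  refine mem_lang_genLimitSet (i := 0) (isCA_localMap D.cellRule).1
    (isClopen_cylinder_s5 (D.acceptedWord u) 0).isOpen (cylinder_nonempty_s5 _ _) fun x hx M N => ?_
  obtain ⟨y, hy, t, ht, hty⟩ :=
    exists_iterate_mem_cylinder_acceptedWord hu hx (M := M + N + u.length) (by omega)
  exact ⟨y, fun i hi => hy i (by omega), t, by omega, hty⟩

theorem acceptedWord_mem_lang_of_prefix [Finite W] {u v : List Bool} (hv : v <+: u)
    (hu : ∀ z, D.Accepts (u ++ z)) :
    D.acceptedWord v ∈ lang (genLimitSet (localMap D.cellRule)) := by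
  obtain ⟨y, hy, i, hyi⟩ := acceptedWord_mem_lang hu
  obtain ⟨h₀, h⟩ := mem_cylinder_acceptedWord.1 hyi
  refine ⟨y, hy, i, mem_cylinder_acceptedWord.2 ⟨h₀, fun j b hj => h j b ?_⟩⟩
  obtain ⟨w, rfl⟩ := hv
  rwa [List.getElem?_append_left (List.getElem?_eq_some_iff.1 hj).1]

end RowMachine

end Completeness

section Reduction

/-- The part `1ⁿ⁺¹ 0` of `queryWord n k z` that does not depend on `k`. -/
def queryPrefix (n : ℕ) : List Bool := List.replicate (n + 1) true ++ [false]

theorem queryPrefix_prefix_queryWord (n k : ℕ) (z : List Bool) :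
    queryPrefix n <+: queryWord n k z :=
  ⟨List.replicate k true ++ false :: z, by simp [queryPrefix, queryWord]⟩

theorem queryWord_append (n k : ℕ) (z z' : List Bool) :
    queryWord n k z ++ z' = queryWord n k (z ++ z') := by
  simp [queryWord]

theorem map_range_eq_replicate_append {b : ℕ → Bool} {m : ℕ} (htrue : ∀ j < m, b j = true)
    (hfalse : b m = false) (N : ℕ) : (List.range (m + 1 + N)).map b =
      List.replicate m true ++ false :: (List.range N).map fun j => b (m + 1 + j) := by
  have hm : (List.range m).map b = List.replicate m true :=
    List.eq_replicate_iff.2 ⟨by simp, by simpa⟩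
  simp [List.range_add, List.range_succ, hm, hfalse]

theorem exists_map_range_eq_queryWord {b : ℕ → Bool} {n : ℕ}
    (hb : ∀ j c, (queryPrefix n)[j]? = some c → b j = c) (hfalse : ∃ᶠ j in atTop, b j = false) :
    ∃ k, ∀ N, ∃ z, (List.range (n + k + 3 + N)).map b = queryWord n k z ∧ z.length = N := by
  classical
  have hex : ∃ k, b (n + 2 + k) = false := by
    obtain ⟨j, hj, hbj⟩ := frequently_atTop.1 hfalse (n + 2)
    exact ⟨j - (n + 2), by rwa [Nat.add_sub_cancel' hj]⟩
  set k := Nat.find hex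
  have hfirst := map_range_eq_replicate_append (b := b) (m := n + 1)
    (fun j hj => hb j true (by simp [queryPrefix, List.getElem?_append, hj]))
    (hb _ _ (by simp [queryPrefix]))
  have hsecond := map_range_eq_replicate_append (b := fun j => b (n + 2 + j)) (m := k)
    (fun j hj => by simpa using Nat.find_min hex hj) (Nat.find_spec hex)
  refine ⟨k, fun N => ⟨(List.range N).map fun j => b (n + 2 + (k + 1 + j)), ?_, by simp⟩⟩
  rw [show n + k + 3 + N = n + 1 + 1 + (k + 1 + N) by omega, hfirst, hsecond, queryWord]

theorem acceptedWord_queryPrefix_mem_lang_iff {W : Type*} [Finite W] {D : RowMachine W}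
    {S : (ℕ × ℕ) × ℕ → Prop} (hD : ∀ n k z, D.Accepts (queryWord n k z) ↔ S ((n, k), z.length))
    (hS : ∀ n k, Antitone fun a => S ((n, k), a)) (n : ℕ) :
    D.acceptedWord (queryPrefix n) ∈ lang (genLimitSet (localMap D.cellRule)) ↔
      ∃ k, ∀ a, S ((n, k), a) := by
  constructor
  · intro h
    obtain ⟨b, hb, hfalse, haccepts⟩ := D.exists_frequently_accepts_of_acceptedWord_mem_lang h
    obtain ⟨k, hk⟩ := exists_map_range_eq_queryWord hb hfalse
    refine ⟨k, fun a => ?_⟩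
    obtain ⟨L, hL, hacc⟩ := frequently_atTop.1 haccepts (n + k + 3 + a)
    obtain ⟨N, rfl⟩ := Nat.exists_eq_add_of_le hL
    obtain ⟨z, hz, hlength⟩ := hk (a + N)
    rw [add_assoc, hz, hD, hlength] at hacc
    exact hS n k (Nat.le_add_right a N) hacc
  · rintro ⟨k, hk⟩
    refine D.acceptedWord_mem_lang_of_prefix (queryPrefix_prefix_queryWord n k []) fun z => ?_
    rw [queryWord_append, hD]
    exact hk _

theorem computable_map_acceptedWord_queryPrefix {W γ : Type*} [Primcodable γ] (D : RowMachine W)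
    (e : Cell W → γ) : Computable fun n => (D.acceptedWord (queryPrefix n)).map e := by
  have hword : Primrec fun n => e ⟨.verifier .accepted, .none, D.blank⟩ ::
      (List.replicate (n + 1) (e ⟨.bit true, .none, D.blank⟩) ++
        [e ⟨.bit false, .none, D.blank⟩]) :=
    Primrec.list_cons.comp (Primrec.const _) (Primrec.list_append.comp
      ((primrec_replicate _).comp Primrec.succ) (Primrec.const _))
  exact (hword.of_eq fun n => by simp [RowMachine.acceptedWord, queryPrefix]).to_comp

theorem NatSigma.exists_isCA_computable {p : ℕ → Prop} (hp : NatSigma 3 p) :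
    ∃ (m : ℕ) (f : (ℤ → Fin m) → (ℤ → Fin m)) (φ : ℕ → List (Fin m)),
      IsCA f ∧ Computable φ ∧ ∀ n, p n ↔ φ n ∈ lang (genLimitSet f) := by
  obtain ⟨S, hS, hanti, hpS⟩ := hp.exists_rePred_antitone
  obtain ⟨L, hL, hLS⟩ := exists_rePred_binaryValue_queryWord hS
  obtain ⟨W, _, D, hDL⟩ := exists_rowMachine_of_rePred hL
  have hD (n k : ℕ) (z : List Bool) : D.Accepts (queryWord n k z) ↔ S ((n, k), z.length) := by
    rw [← hLS, queryWord_eq_cons, hDL]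
  obtain ⟨m, e, f, hf, hlang⟩ := exists_fin_isCA_of_localMap D.cellRule
  refine ⟨m, f, fun n => (D.acceptedWord (queryPrefix n)).map e, hf,
    computable_map_acceptedWord_queryPrefix D e, fun n => ?_⟩
  rw [hlang, acceptedWord_queryPrefix_mem_lang_iff hD hanti, hpS]

end Reduction

theorem stmt5_general {A : Type*} [Primcodable A] (P : Set (List A)) (hP : SigmaLang 3 P) :
    ∃ (m : ℕ) (f : (ℤ → Fin m) → (ℤ → Fin m)) (φ : List A → List (Fin m)),
      IsCA f ∧ Computable φ ∧ ∀ w : List A, w ∈ P ↔ φ w ∈ lang (genLimitSet f) := by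
  obtain ⟨m, f, φ, hf, hφ, h⟩ := NatSigma.exists_isCA_computable hP
  refine ⟨m, f, φ ∘ Encodable.encode, hf, hφ.comp Computable.encode, fun w => ?_⟩
  rw [comp_apply, ← h]
  simp only [Encodable.encode_inj, exists_eq_left]

/-- every `Σ⁰₃` set of words many-one reduces to the language of the generic
limit set of some cellular automaton: there are a finite alphabet `Fin m`, a CA `f` on
`(Fin m)^ℤ` and a total computable map `φ` with `w ∈ P ↔ φ(w) ∈ L(ω̃(f))`. -/
theorem stmt5 {A : Type} [Fintype A] [Primcodable A] (P : Set (List A))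
    (hP : SigmaLang 3 P) :
    ∃ (m : ℕ) (f : (ℤ → Fin m) → (ℤ → Fin m)) (φ : List A → List (Fin m)),
      IsCA f ∧ Computable φ ∧ ∀ w : List A, w ∈ P ↔ φ w ∈ lang (genLimitSet f) :=
  stmt5_general P hP

end Gls
end
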